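/- arXiv:1601.05035 — 2 statements merged into one kernel-verified Lean document; each statement's English description precedes it below -/
import Mathlib

section
/- All higher homotopy groups of the circle vanish: for the topological circle S¹ (the unit sphere in the Euclidean plane ℝ², with the subspace topology), any basepoint b ∈ S¹, and any k ≥ 2, the k-th homotopy group π_k(S¹, b) is the trivial group. -/
/-!
The exponential `ℝ → S¹` is a surjective covering map with contractible total space. Since the
cube `I^k` contracts radially to its corner `0`, a generalized loop `f : I^k → S¹` lifts to a map
`F : I^k → ℝ` (`IsCoveringMap.exists_lift_cube`). On the boundary of the cube `F` takes values in
a fibre, which is discrete; each face of the cube is connected, so `F` is constant on it, and for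
`k ≥ 2` any face can be joined to the corner `0` through at most one further face, so `F` is
constant on the whole boundary (`IsCoveringMap.lift_eq_of_mem_boundary`; this is what fails for
`k = 1`). The straight-line homotopy from `F` to that constant is then stationary on the boundary,
and its image in `S¹` contracts `f` relative to the boundary.
-/

open scoped Topology unitInterval

/-- The homeomorphism between the unit circle of `ℂ` and the unit sphere of the Euclidean plane,
induced by the isometry `z ↦ (re z, im z)`. -/
noncomputable def circleHomeoSphere :
    Circle ≃ₜ Metric.sphere (0 : EuclideanSpace ℝ (Fin 2)) 1 where
  toFun z := ⟨Complex.orthonormalBasisOneI.repr z, by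
    rw [mem_sphere_zero_iff_norm, LinearIsometryEquiv.norm_map]
    exact Circle.norm_coe z⟩
  invFun x := ⟨Complex.orthonormalBasisOneI.repr.symm x, by
    refine mem_sphere_zero_iff_norm.2 ?_
    rw [LinearIsometryEquiv.norm_map]
    exact mem_sphere_zero_iff_norm.1 x.2⟩
  left_inv z := Circle.ext (Complex.orthonormalBasisOneI.repr.symm_apply_apply z)
  right_inv x := Subtype.ext (Complex.orthonormalBasisOneI.repr.apply_symm_apply x)
  continuous_toFun := by fun_prop
  continuous_invFun := Continuous.subtype_mk
    (Complex.orthonormalBasisOneI.repr.symm.continuous.comp continuous_subtype_val) fun x ↦ by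
      refine mem_sphere_zero_iff_norm.2 ?_
      exact (LinearIsometryEquiv.norm_map _ _).trans (mem_sphere_zero_iff_norm.1 x.2)

section Covering

variable {E X N : Type*} [TopologicalSpace E] [TopologicalSpace X] {p : E → X}

theorem IsCoveringMap.exists_lift_cube (hp : IsCoveringMap p) (f : C(I^N, X)) (e : E)
    (he : f 0 = p e) : ∃ F : C(I^N, E), ∀ y, p (F y) = f y := by
  -- Lift the radial contraction `(t, y) ↦ f (t * y)`, which starts at a constant map.
  let H : C(I × (I^N), X) := f.comp ⟨fun ty i ↦ ty.1 * ty.2 i, by fun_prop⟩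
  have H_zero : ∀ y, H (0, y) = p (ContinuousMap.const (I^N) e y) := fun y ↦ by
    have h : (fun i ↦ 0 * y i : I^N) = 0 := by ext; simp
    exact (congrArg f h).trans he
  refine ⟨(hp.liftHomotopy H _ H_zero).comp ⟨fun y ↦ (1, y), by fun_prop⟩, fun y ↦ ?_⟩
  simpa [H] using congrFun (hp.liftHomotopy_lifts H _ H_zero) (1, y)

theorem isPreconnected_cube_face [DecidableEq N] (i : N) (c : I) :
    IsPreconnected {y : I^N | y i = c} := by
  have h : {y : I^N | y i = c} =
      Set.univ.pi (Function.update (fun _ ↦ (Set.univ : Set I)) i {c}) := by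
    ext y
    rw [Set.mem_univ_pi]
    refine ⟨fun hy j ↦ ?_, fun hy ↦ by simpa using hy i⟩
    obtain rfl | hj := eq_or_ne j i
    · simpa using hy
    · simp [hj]
  rw [h]
  refine isPreconnected_univ_pi fun j ↦ ?_
  obtain rfl | hj := eq_or_ne j i
  · simpa using isPreconnected_singleton
  · simpa [hj] using isPreconnected_univ

/-- A lift of a map that is constant on the boundary of a cube of dimension at least two is itself
constant on the boundary. -/
theorem IsCoveringMap.lift_eq_of_mem_boundary [Nontrivial N] (hp : IsCoveringMap p)
    (F : C(I^N, E)) (x : X) (hF : ∀ y ∈ Cube.boundary N, p (F y) = x) :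
    ∀ y ∈ Cube.boundary N, F y = F 0 := by
  classical
  have face : ∀ (i : N) (c : I), c = 0 ∨ c = 1 → ∀ y z : I^N, y i = c → z i = c → F y = F z :=
    fun i c hc y z hy hz ↦
      hp.constOn_of_comp (isPreconnected_cube_face i c) F.continuous.continuousOn
        (fun a ha a' ha' ↦ (hF a ⟨i, by rwa [ha.out]⟩).trans (hF a' ⟨i, by rwa [ha'.out]⟩).symm)
        hy hz
  rintro y ⟨i, hi | hi⟩
  · exact face i 0 (.inl rfl) y 0 hi rfl
  · -- The vertex `Function.update 0 i 1` lies both on the face `i = 1` and on the face `j = 0`.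
    obtain ⟨j, hj⟩ := exists_ne i
    exact (face i 1 (.inr rfl) y (Function.update 0 i 1) hi (by simp)).trans
      (face j 0 (.inl rfl) _ 0 (by simp [hj]) rfl)

/-- A generalized loop of dimension at least two in a space covered by a real topological vector
space is null-homotopic. -/
theorem GenLoop.homotopic_const_of_isCoveringMap [Nontrivial N] [AddCommGroup E]
    [IsTopologicalAddGroup E] [Module ℝ E] [ContinuousSMul ℝ E] (hp : IsCoveringMap p)
    (hs : Function.Surjective p) {x : X} (f : GenLoop N X x) :
    GenLoop.Homotopic f GenLoop.const := by
  obtain ⟨e, he⟩ := hs (f 0)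
  obtain ⟨F, hF⟩ := hp.exists_lift_cube f.1 e he.symm
  have hb := hp.lift_eq_of_mem_boundary F x fun y hy ↦ (hF y).trans (f.2 y hy)
  have h_zero : p (F 0) = x :=
    (hF 0).trans (f.2 0 ⟨Classical.arbitrary N, .inl rfl⟩)
  let G : F.HomotopyRel (.const _ (F 0)) (Cube.boundary N) :=
    { ContinuousMap.Homotopy.affine F (.const _ (F 0)) with
      prop' := fun t y hy ↦ by
        change Path.segment (F y) (F 0) t = F y
        rw [← hb y hy]
        simp }
  have key := ContinuousMap.HomotopicRel.comp_continuousMap ⟨G⟩ ⟨p, hp.continuous⟩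
  have h_left : ContinuousMap.comp ⟨p, hp.continuous⟩ F = f.1 := ContinuousMap.ext hF
  have h_right : ContinuousMap.comp ⟨p, hp.continuous⟩ (.const (I^N) (F 0)) =
      (GenLoop.const : GenLoop N X x).1 := ContinuousMap.ext fun _ ↦ h_zero
  rwa [h_left, h_right] at key

end Covering

/-- All higher homotopy groups of the topological circle (the unit sphere in the
Euclidean plane `ℝ²`) vanish: for any basepoint `b` and any `k ≥ 2`, the `k`-th
homotopy group `π_k(S¹, b)` is trivial (it has exactly one element; note that it
is always inhabited by the class of the constant loop). -/
theorem higher_homotopyGroups_circle_trivial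
    (b : Metric.sphere (0 : EuclideanSpace ℝ (Fin 2)) 1) (k : ℕ) (hk : 2 ≤ k) :
    Subsingleton (π_ k (Metric.sphere (0 : EuclideanSpace ℝ (Fin 2)) 1) b) := by
  have : Nontrivial (Fin k) := Fin.nontrivial_iff_two_le.2 hk
  have hp : IsCoveringMap (circleHomeoSphere ∘ Circle.exp) :=
    Circle.isCoveringMap_exp.homeomorph_comp circleHomeoSphere
  have hs : Function.Surjective (circleHomeoSphere ∘ Circle.exp) :=
    circleHomeoSphere.surjective.comp Circle.exp_surjective
  have h_null := fun f ↦ GenLoop.homotopic_const_of_isCoveringMap (N := Fin k) (x := b) hp hs f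
  refine ⟨fun α β ↦ ?_⟩
  induction α using Quotient.inductionOn
  induction β using Quotient.inductionOn
  exact Quotient.sound ((h_null _).trans (h_null _).symm)
end

section
/- For every n ≥ 1, the n-th homotopy group of the n-sphere is infinite cyclic: for Sⁿ the unit sphere in Euclidean space ℝ^{n+1} (with the subspace topology) and any basepoint b ∈ Sⁿ, there is a group isomorphism π_n(Sⁿ, b) ≅ ℤ. -/
/-!
The sphere is replaced by the homotopy equivalent punctured space `X m = (ℝ × ℝᵐ) ∖ {0}`
with base point `(1, 0)`, `m = n + 1`. Its `m`-th homotopy group is shown to be generated by the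
class of an explicit loop `gen`, and a homomorphism to `ℝ` not vanishing on this class, the degree,
shows that the class has infinite order.

*Generation* (`mem_zpowers`). Composition with the map `collapse ε`, which sends everything outside
the `ε`-neighbourhood of the negative half axis to the base point and wraps the normal discs of the
half axis around the origin, does not change the class of a loop. A loop `f` can be approximated by
a `C²` map `p`, and by the easy case of Sard's theorem a translation makes `0` a regular value of
its component in `ℝᵐ`. Then only finitely many points of the cube go to the negative half axis,
and `p` has an invertible derivative there. Cutting the cube by walls `z i = c` that separate these
points (`cls_split`, `good_split`) turns the class into a product of classes of maps with at
most one such point (`Transverse.good`). Such a map deforms to its linearization (`good_single`),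
and the linearization to a diagonal matrix of signs (`exists_matrix_path`); the signs amount to
inverting the class of `gen` several times.

*Infinite order* (`deg_gen_pos`). Let `ρ` be a smooth function supported near the negative half
axis and, away from the origin, locally independent of the first coordinate. The form
`ρ dy₁ ∧ ⋯ ∧ dyₘ` is then closed away from the origin. The degree of a loop is the integral over the
cube of the pullback of this form by a `C²` approximation of the loop. By the divergence theorem it
does not depend on the approximation (`degI_eq_of_homotopy`), so it is a homotopy invariant
(`deg_eq_of_homotopic`); it is additive under concatenation (`deg_transAt`), and it is positive on
`gen`, whose Jacobian determinant is `6ᵐ` wherever `ρ` does not vanish.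
-/

open scoped Topology

namespace SpherePi

open scoped unitInterval Topology.Homotopy
open Set

/-! ### Generalized loops: homotopies, functoriality, splitting -/

section GenLoopTools

variable {N : Type*} {X Y : Type*} [TopologicalSpace X] [TopologicalSpace Y] {x : X} {y : Y}

lemma homotopic_of (f g : Ω^ N X x) (h : I → (N → I) → X)
    (hc : Continuous (Function.uncurry h)) (h0 : ∀ z, h 0 z = f z) (h1 : ∀ z, h 1 z = g z)
    (hb : ∀ t, ∀ z ∈ Cube.boundary N, h t z = x) : GenLoop.Homotopic f g :=
  ⟨{ toFun := Function.uncurry h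
     continuous_toFun := hc
     map_zero_left := h0
     map_one_left := h1
     prop' := fun t z hz => by
      change h t z = f z
      rw [hb t z hz, GenLoop.boundary f z hz] }⟩

/-- The class of a generalized loop in the homotopy group. -/
def cls (f : Ω^ N X x) : HomotopyGroup N X x := ⟦f⟧

lemma cls_eq {f g : Ω^ N X x} (h : GenLoop.Homotopic f g) : cls f = cls g :=
  Quotient.sound h

lemma cls_surj (a : HomotopyGroup N X x) : ∃ f : Ω^ N X x, cls f = a :=
  Quotient.exists_rep a

/-- Postcomposition of a generalized loop with a pointed map. -/
def mapLoop (φ : C(X, Y)) (hφ : φ x = y) (f : Ω^ N X x) : Ω^ N Y y :=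
  ⟨φ.comp f.1, fun z hz => by
    change φ (f z) = y
    rw [GenLoop.boundary f z hz, hφ]⟩

variable [DecidableEq N]

lemma cls_mul [Nonempty N] (i : N) (f g : Ω^ N X x) :
    cls f * cls g = cls (GenLoop.transAt i g f) := HomotopyGroup.mul_spec

lemma cls_inv [Nonempty N] (i : N) (f : Ω^ N X x) :
    (cls f)⁻¹ = cls (GenLoop.symmAt i f) := HomotopyGroup.inv_spec

lemma transAt_apply (i : N) (f g : Ω^ N X x) (t : N → I) :
    GenLoop.transAt i f g t = if (t i : ℝ) ≤ 1 / 2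
      then f (Function.update t i <| Set.projIcc 0 1 zero_le_one (2 * t i))
      else g (Function.update t i <| Set.projIcc 0 1 zero_le_one (2 * t i - 1)) := rfl

lemma symmAt_apply (i : N) (f : Ω^ N X x) (t : N → I) :
    GenLoop.symmAt i f t = f fun j ↦ if j = i then σ (t i) else t j := rfl

/-- The homomorphism of homotopy groups induced by a pointed map. -/
noncomputable def mapPi [Nonempty N] (φ : C(X, Y)) (hφ : φ x = y) :
    HomotopyGroup N X x →* HomotopyGroup N Y y :=
  MonoidHom.mk' (Quotient.map (mapLoop φ hφ) fun f g h => by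
    obtain ⟨H⟩ := h
    refine homotopic_of _ _ (fun t z => φ (H (t, z)))
      (φ.continuous.comp H.continuous) ?_ ?_ ?_
    · intro z; simp; rfl
    · intro z; simp; rfl
    · intro t z hz
      rw [H.eq_fst t hz]
      change φ (f z) = y
      rw [GenLoop.boundary f z hz, hφ]) (by
    rintro ⟨f⟩ ⟨g⟩
    have i : N := Classical.arbitrary N
    change Quotient.map _ _ (cls f * cls g) = cls (mapLoop φ hφ f) * cls (mapLoop φ hφ g)
    rw [cls_mul i, cls_mul i]
    change cls _ = cls _
    congr 1
    ext t
    rw [transAt_apply]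
    change φ (GenLoop.transAt i g f t) = _
    rw [transAt_apply]
    split_ifs <;> rfl)

lemma mapPi_cls [Nonempty N] (φ : C(X, Y)) (hφ : φ x = y) (f : Ω^ N X x) :
    mapPi φ hφ (cls f) = cls (mapLoop φ hφ f) := rfl

/-- The affine contraction of the cube onto its part `z i ≤ c`. -/
def leftMap (i : N) (c : I) (z : N → I) : N → I := Function.update z i (c * z i)

/-- The affine contraction of the cube onto its part `c ≤ z i`. -/
def rightMap (i : N) (c : I) (z : N → I) : N → I := Function.update z i (σ (σ c * σ (z i)))

@[fun_prop]
lemma continuous_leftMap (i : N) (c : I) : Continuous (leftMap i c) := by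
  unfold leftMap; fun_prop

@[fun_prop]
lemma continuous_rightMap (i : N) (c : I) : Continuous (rightMap i c) := by
  unfold rightMap; fun_prop

lemma leftMap_boundary (i : N) (c : I) {z : N → I} (hz : z ∈ Cube.boundary N) :
    leftMap i c z i = c ∨ leftMap i c z ∈ Cube.boundary N := by
  obtain ⟨j, hj⟩ := hz
  by_cases h : j = i
  · subst h
    rcases hj with hj | hj
    · right; exact ⟨j, by simp [leftMap, hj]⟩
    · left; simp [leftMap, hj]
  · right; exact ⟨j, by simpa [leftMap, Function.update_of_ne h] using hj⟩

lemma rightMap_boundary (i : N) (c : I) {z : N → I} (hz : z ∈ Cube.boundary N) :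
    rightMap i c z i = c ∨ rightMap i c z ∈ Cube.boundary N := by
  obtain ⟨j, hj⟩ := hz
  by_cases h : j = i
  · subst h
    rcases hj with hj | hj
    · left; simp [rightMap, hj]
    · right; exact ⟨j, by simp [rightMap, hj]⟩
  · right; exact ⟨j, by simpa [rightMap, Function.update_of_ne h] using hj⟩

/-- A generalized loop which is constant on the wall `z i = c` is the product of its
restrictions to the two sides of the wall. -/
lemma cls_split [Nonempty N] (i : N) (c : I) (g : Ω^ N X x) (hg : ∀ z : N → I, z i = c → g z = x) :
    ∃ gL gR : Ω^ N X x, (∀ z, gL z = g (leftMap i c z)) ∧ (∀ z, gR z = g (rightMap i c z)) ∧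
      cls g = cls gR * cls gL := by
  have hL : ∀ z ∈ Cube.boundary N, g (leftMap i c z) = x := fun z hz =>
    (leftMap_boundary i c hz).elim (hg _) (GenLoop.boundary g _)
  have hR : ∀ z ∈ Cube.boundary N, g (rightMap i c z) = x := fun z hz =>
    (rightMap_boundary i c hz).elim (hg _) (GenLoop.boundary g _)
  let gL : Ω^ N X x := ⟨⟨fun z => g (leftMap i c z), by fun_prop⟩, hL⟩
  let gR : Ω^ N X x := ⟨⟨fun z => g (rightMap i c z), by fun_prop⟩, hR⟩
  refine ⟨gL, gR, fun _ => rfl, fun _ => rfl, ?_⟩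
  rw [cls_mul i]
  -- `θ` sends `[0, 1/2]` affinely onto `[0, c]` and `[1/2, 1]` onto `[c, 1]`
  let θ : ℝ → ℝ := fun t => c * min (2 * t) 1 + (1 - c) * max (2 * t - 1) 0
  let φ : I → I → ℝ := fun s t => (1 - s) * t + s * θ t
  have hc0 : (0 : ℝ) ≤ c := c.2.1
  have hc1 : (c : ℝ) ≤ 1 := c.2.2
  apply cls_eq
  refine homotopic_of _ _
    (fun s z => g (Function.update z i (Set.projIcc 0 1 zero_le_one (φ s (z i))))) ?_ ?_ ?_ ?_
  · have : Continuous fun p : I × (N → I) => φ p.1 (p.2 i) := by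
      simp only [φ, θ]; fun_prop
    have h2 : Continuous fun p : I × (N → I) =>
      Set.projIcc (0:ℝ) 1 zero_le_one (φ p.1 (p.2 i)) := continuous_projIcc.comp this
    change Continuous fun p : I × (N → I) =>
      g (Function.update p.2 i (Set.projIcc (0:ℝ) 1 zero_le_one (φ p.1 (p.2 i))))
    fun_prop
  · intro z
    simp [φ]
  · intro z
    rw [transAt_apply]
    split_ifs with h
    · change _ = g (leftMap i c _)
      congr 1
      unfold leftMap
      simp only [Function.update_self, Function.update_idem]
      congr 1
      have h0 := (z i).2.1
      apply Subtype.ext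
      rw [Set.coe_projIcc, Set.Icc.coe_mul, Set.coe_projIcc]
      simp only [φ, θ, Set.Icc.coe_one, sub_self, zero_mul, one_mul, zero_add]
      rw [min_eq_left (by linarith : 2 * (z i : ℝ) ≤ 1), max_eq_right (by linarith : 2 * (z i : ℝ) - 1 ≤ 0),
        min_eq_right (by linarith : 2 * (z i : ℝ) ≤ 1), mul_zero, add_zero,
        max_eq_right (by linarith : 0 ≤ 2 * (z i : ℝ)),
        min_eq_right (by nlinarith : (c : ℝ) * (2 * z i) ≤ 1),
        max_eq_right (by nlinarith : 0 ≤ (c : ℝ) * (2 * z i))]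
    · change _ = g (rightMap i c _)
      congr 1
      unfold rightMap
      simp only [Function.update_self, Function.update_idem]
      congr 1
      have h0 := (z i).2.2
      push Not at h
      apply Subtype.ext
      rw [Set.coe_projIcc, unitInterval.coe_symm_eq, Set.Icc.coe_mul,
        unitInterval.coe_symm_eq, unitInterval.coe_symm_eq, Set.coe_projIcc]
      simp only [φ, θ, Set.Icc.coe_one, sub_self, zero_mul, one_mul, zero_add]
      rw [min_eq_right (by linarith : 1 ≤ 2 * (z i : ℝ)), max_eq_left (by linarith : 0 ≤ 2 * (z i : ℝ) - 1),
        min_eq_right (by linarith : 2 * (z i : ℝ) - 1 ≤ 1),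
        max_eq_right (by linarith : 0 ≤ 2 * (z i : ℝ) - 1),
        min_eq_right (by nlinarith : (c : ℝ) * 1 + (1 - c) * (2 * z i - 1) ≤ 1),
        max_eq_right (by nlinarith : 0 ≤ (c : ℝ) * 1 + (1 - c) * (2 * z i - 1))]
      ring
  · rintro s z ⟨j, hj⟩
    apply GenLoop.boundary g
    refine ⟨j, ?_⟩
    by_cases h : j = i
    · subst h
      simp only [Function.update_self]
      rcases hj with hj | hj
      · left; simp [φ, θ, hj]
      · right; simp [φ, θ, hj]; norm_num
    · simpa [Function.update_of_ne h] using hj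

end GenLoopTools

/-! ### The punctured space and the collapsing maps -/

/-- The ambient vector space `ℝ × ℝᵐ`; its norm is the sup norm. -/
abbrev V (m : ℕ) := ℝ × (Fin m → ℝ)

/-- The punctured space `(ℝ × ℝᵐ) ∖ {0}`, a model of the `m`-sphere up to homotopy. -/
abbrev X (m : ℕ) := {y : V m // y ≠ 0}

/-- The base point `(1, 0)`. -/
def base (m : ℕ) : X m := ⟨(1, 0), by simp⟩

variable {m : ℕ}

/-- The inclusion of the cube `Iᵐ` in `ℝᵐ`. -/
def toR (z : Fin m → I) : Fin m → ℝ := fun i => z i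

@[fun_prop]
lemma continuous_toR : Continuous (toR (m := m)) := by unfold toR; fun_prop

lemma toR_injective : Function.Injective (toR (m := m)) := fun a b h => by
  ext i; exact congrFun h i

/-- A smooth cutoff equal to `1` on the ball of radius `1/3`, and `0` outside the one of
radius `2/3`. -/
noncomputable def bumpA (m : ℕ) : ContDiffBump (0 : Fin m → ℝ) :=
  ⟨1 / 3, 2 / 3, by norm_num, by norm_num⟩

/-- A smooth cutoff equal to `1` on the ball of radius `2/3`, and `0` outside the one of
radius `1`. -/
noncomputable def bumpB (m : ℕ) : ContDiffBump (0 : Fin m → ℝ) :=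
  ⟨2 / 3, 1, by norm_num, by norm_num⟩

/-- The smooth map wrapping the unit ball of `ℝᵐ` once around the origin of `ℝ × ℝᵐ`: it sends
the centre to `(-1, 0)` and everything outside the open unit ball to the base point. -/
noncomputable def wrap (v : Fin m → ℝ) : V m := (1 - 2 * bumpA m v, (3 * bumpB m v) • v)

lemma wrap_contDiff : ContDiff ℝ 2 (wrap (m := m)) := by
  have h1 : ContDiff ℝ 2 (bumpA m) := (bumpA m).contDiff
  have h2 : ContDiff ℝ 2 (bumpB m) := (bumpB m).contDiff
  unfold wrap; fun_prop

@[fun_prop]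
lemma continuous_wrap : Continuous (wrap (m := m)) := wrap_contDiff.continuous

lemma wrap_of_one_le {v : Fin m → ℝ} (hv : 1 ≤ ‖v‖) : wrap v = (1, 0) := by
  have h1 : bumpA m v = 0 := (bumpA m).zero_of_le_dist (by
    simp only [dist_zero_right]; change 2 / 3 ≤ ‖v‖; linarith)
  have h2 : bumpB m v = 0 := (bumpB m).zero_of_le_dist (by
    rw [dist_zero_right]; exact hv)
  simp [wrap, h1, h2]

lemma bumpA_eq_one {v : Fin m → ℝ} (hv : ‖v‖ ≤ 1 / 3) : bumpA m v = 1 :=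
  (bumpA m).one_of_mem_closedBall (mem_closedBall_zero_iff.mpr hv)

lemma bumpA_eq_zero {v : Fin m → ℝ} (hv : 2 / 3 ≤ ‖v‖) : bumpA m v = 0 :=
  (bumpA m).zero_of_le_dist (by rw [dist_zero_right]; exact hv)

lemma bumpB_eq_one {v : Fin m → ℝ} (hv : ‖v‖ ≤ 2 / 3) : bumpB m v = 1 :=
  (bumpB m).one_of_mem_closedBall (mem_closedBall_zero_iff.mpr hv)

lemma one_le_norm_wrap (v : Fin m → ℝ) : 1 ≤ ‖wrap v‖ := by
  rw [Prod.norm_def]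
  by_cases h1 : ‖v‖ ≤ 1 / 3
  · apply le_max_of_le_left
    simp only [wrap, bumpA_eq_one h1]; norm_num
  · by_cases h2 : ‖v‖ ≤ 2 / 3
    · apply le_max_of_le_right
      simp only [wrap, bumpB_eq_one h2, norm_smul]; norm_num; push Not at h1; linarith
    · apply le_max_of_le_left
      simp only [wrap, bumpA_eq_zero (le_of_not_ge h2)]; norm_num

lemma wrap_ne_zero (v : Fin m → ℝ) : wrap v ≠ 0 := by
  intro h; have := one_le_norm_wrap v; rw [h] at this; norm_num at this

/-- The collapsing map: around the negative half axis of `ℝ × ℝᵐ` it wraps the normal discs of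
radius `ε` around the origin, and it sends the rest to the base point. -/
noncomputable def collapse (ε : ℝ) (y : V m) : X m :=
  if 0 ≤ y.1 then base m else ⟨wrap (ε⁻¹ • y.2), wrap_ne_zero _⟩

lemma collapse_of_nonneg {ε : ℝ} {y : V m} (h : 0 ≤ y.1) : collapse ε y = base m := if_pos h

lemma collapse_of_neg {ε : ℝ} {y : V m} (h : y.1 < 0) :
    collapse ε y = ⟨wrap (ε⁻¹ • y.2), wrap_ne_zero _⟩ := if_neg (not_le.mpr h)

lemma wrap_smul_of_le {ε : ℝ} (hε : 0 < ε) {v : Fin m → ℝ} (h : ε ≤ ‖v‖) :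
    wrap (ε⁻¹ • v) = (1, 0) := by
  apply wrap_of_one_le
  rw [norm_smul, norm_inv, Real.norm_of_nonneg hε.le, ← div_eq_inv_mul, le_div_iff₀ hε]
  linarith

lemma collapse_of_le {ε : ℝ} (hε : 0 < ε) {y : V m} (h : y.1 ≤ 0 → ε ≤ ‖y.2‖) :
    collapse ε y = base m := by
  by_cases h0 : 0 ≤ y.1
  · exact collapse_of_nonneg h0
  · push Not at h0
    rw [collapse_of_neg h0]
    apply Subtype.ext
    exact wrap_smul_of_le hε (h h0.le)

lemma continuous_collapse {Z : Type*} [TopologicalSpace Z] {e : Z → ℝ} {y : Z → V m}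
    (he : Continuous e) (hy : Continuous y) (hpos : ∀ z, 0 < e z)
    (h : ∀ z, (y z).1 = 0 → e z ≤ ‖(y z).2‖) : Continuous fun z => collapse (e z) (y z) := by
  have hinv : Continuous fun z => (e z)⁻¹ := he.inv₀ fun z => (hpos z).ne'
  refine Continuous.if_le continuous_const (by fun_prop) continuous_const (by fun_prop) ?_
  intro z hz
  apply Subtype.ext
  exact (wrap_smul_of_le (hpos z) (h z hz.symm)).symm

/-- `2 z - 1`, identifying the cube with the closed unit ball of `ℝᵐ`. -/
noncomputable def center (z : Fin m → I) : Fin m → ℝ := fun i => 2 * (z i : ℝ) - 1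

@[fun_prop]
lemma continuous_center : Continuous (center (m := m)) := by unfold center; fun_prop

lemma one_le_norm_of_boundary {z : Fin m → I} (hz : z ∈ Cube.boundary (Fin m)) (s : Fin m → ℝ)
    (hs : ∀ i, |s i| = 1) : 1 ≤ ‖fun i => s i * center z i‖ := by
  obtain ⟨i, hi⟩ := hz
  refine le_trans ?_ (norm_le_pi_norm _ i)
  rw [norm_mul, Real.norm_eq_abs, hs i]
  rcases hi with hi | hi <;> simp [center, hi]; norm_num

/-- The wrapping map precomposed with sign changes of the coordinates. -/
noncomputable def signLoop (s : Fin m → ℝ) (hs : ∀ i, |s i| = 1) : Ω^ (Fin m) (X m) (base m) :=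
  ⟨⟨fun z => ⟨wrap fun i => s i * center z i, wrap_ne_zero _⟩, by fun_prop⟩, fun z hz => by
    apply Subtype.ext
    exact wrap_of_one_le (one_le_norm_of_boundary hz s hs)⟩

/-- The generator of the homotopy group of the punctured space. -/
noncomputable def gen (m : ℕ) : Ω^ (Fin m) (X m) (base m) := signLoop (fun _ => 1) (by simp)

/-! ### Collapsed maps whose class is a power of the generator -/

/-- The complement of the closed negative half axis. -/
def InU (y : V m) : Prop := y.1 ≤ 0 → y.2 ≠ 0

lemma InU.ne_zero {y : V m} (h : InU y) : y ≠ 0 := by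
  rintro rfl
  exact h le_rfl rfl

lemma exists_delta {Z : Type*} [TopologicalSpace Z] [CompactSpace Z] {p : Z → V m}
    (hp : Continuous p) {S : Set Z} (hS : IsClosed S) (h : ∀ z ∈ S, (p z).2 ≠ 0) :
    ∃ δ > 0, ∀ z ∈ S, δ ≤ ‖(p z).2‖ := by
  obtain ⟨δ, h1, h2⟩ := hS.isCompact.exists_forall_le' (f := fun z => ‖(p z).2‖) (a := 0)
    (by fun_prop) (fun z hz => norm_pos_iff.mpr (h z hz))
  exact ⟨δ, h1, h2⟩

lemma isClosed_boundary : IsClosed (Cube.boundary (Fin m)) := by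
  have : Cube.boundary (Fin m) = ⋃ i, ({z | z i = 0} ∪ {z | z i = 1}) := by
    ext z; simp [Cube.boundary]
  rw [this]
  refine isClosed_iUnion_of_finite fun i => IsClosed.union ?_ ?_
  · exact isClosed_eq (continuous_apply i) continuous_const
  · exact isClosed_eq (continuous_apply i) continuous_const

lemma signLoop_congr {s s' : Fin m → ℝ} (h : s = s') (hs : ∀ i, |s i| = 1)
    (hs' : ∀ i, |s' i| = 1) : signLoop s hs = signLoop s' hs' := by
  subst h; rfl

/-- Every invertible real matrix can be deformed, through invertible matrices, to a diagonal matrix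
of signs. -/
lemma exists_matrix_path (A : Matrix (Fin m) (Fin m) ℝ) (hA : A.det ≠ 0) :
    ∃ (s : Fin m → ℝ) (γ : I → Matrix (Fin m) (Fin m) ℝ), (∀ i, |s i| = 1) ∧ Continuous γ ∧
      γ 0 = A ∧ γ 1 = Matrix.diagonal s ∧ ∀ t, (γ t).det ≠ 0 := by
  refine Matrix.diagonal_transvection_induction_of_det_ne_zero (fun A =>
    ∃ (s : Fin m → ℝ) (γ : I → Matrix (Fin m) (Fin m) ℝ), (∀ i, |s i| = 1) ∧ Continuous γ ∧
      γ 0 = A ∧ γ 1 = Matrix.diagonal s ∧ ∀ t, (γ t).det ≠ 0) A hA ?_ ?_ ?_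
  · intro D hD
    rw [Matrix.det_diagonal, Finset.prod_ne_zero_iff] at hD
    refine ⟨fun i => |D i|⁻¹ * D i,
      fun t => Matrix.diagonal fun i => ((1 - t : ℝ) + t * |D i|⁻¹) * D i, ?_, ?_, ?_, ?_, ?_⟩
    · intro i
      have := abs_pos.mpr (hD i (Finset.mem_univ i))
      rw [abs_mul, abs_inv, abs_abs]; field_simp
    · exact Continuous.matrix_diagonal (by fun_prop)
    · simp
    · simp
    · intro t
      rw [Matrix.det_diagonal, Finset.prod_ne_zero_iff]
      intro i _
      refine mul_ne_zero (ne_of_gt ?_) (hD i (Finset.mem_univ i))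
      have h1 := t.2.1
      have h2 := t.2.2
      have h3 : 0 < |D i|⁻¹ := inv_pos.mpr (abs_pos.mpr (hD i (Finset.mem_univ i)))
      by_cases h : (t : ℝ) = 1
      · simp [h]; exact hD i (Finset.mem_univ i)
      · have : (t : ℝ) < 1 := lt_of_le_of_ne h2 h
        have := mul_nonneg h1 h3.le
        linarith
  · intro T
    refine ⟨fun _ => 1, fun t => Matrix.transvection T.i T.j ((1 - t) * T.c), by simp, ?_, ?_, ?_,
      ?_⟩
    · unfold Matrix.transvection
      refine continuous_const.add ?_
      refine continuous_matrix fun i j => ?_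
      simp only [Matrix.single_apply]
      split_ifs <;> fun_prop
    · simp [Matrix.TransvectionStruct.toMatrix]
    · simp [Matrix.transvection]
    · intro t
      rw [Matrix.det_transvection_of_ne _ _ T.hij]; norm_num
  · rintro A B - - ⟨s, γ, h1, h2, h3, h4, h5⟩ ⟨s', γ', h1', h2', h3', h4', h5'⟩
    refine ⟨fun i => s i * s' i, fun t => γ t * γ' t, fun i => ?_, h2.matrix_mul h2', ?_, ?_, ?_⟩
    · rw [abs_mul, h1, h1', one_mul]
    · simp [h3, h3']
    · simp [h4, h4', Matrix.diagonal_mul_diagonal]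
    · intro t
      rw [Matrix.det_mul]; exact mul_ne_zero (h5 t) (h5' t)

lemma toR_ne_of_boundary {z : Fin m → I} (hz : z ∈ Cube.boundary (Fin m)) {x : Fin m → ℝ}
    (hx : ∀ i, 0 < x i ∧ x i < 1) : toR z ≠ x := by
  rintro rfl
  obtain ⟨i, hi⟩ := hz
  have := hx i
  rcases hi with hi | hi <;> simp [toR, hi] at this

section Good

variable [Nonempty (Fin m)]

/-- All sufficiently thin collapses of the map `p` represent powers of the generator. -/
def Good (p : (Fin m → I) → V m) : Prop :=
  ∃ ε₀ > 0, ∀ ε, 0 < ε → ε ≤ ε₀ → ∀ g : Ω^ (Fin m) (X m) (base m),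
    (∀ z, g z = collapse ε (p z)) → cls g ∈ Subgroup.zpowers (cls (gen m))

/-- Collapses of homotopic maps are homotopic, provided that the homotopy avoids the origin and
sends the boundary of the cube off the negative half axis; compactness gives a uniform width. -/
lemma good_of_homotopy (P : I → (Fin m → I) → V m) (hc : Continuous (Function.uncurry P))
    (h0 : ∀ t z, P t z ≠ 0) (hb : ∀ t, ∀ z ∈ Cube.boundary (Fin m), InU (P t z))
    (h : Good (P 1)) : Good (P 0) := by
  obtain ⟨δ₁, hδ₁, h1⟩ := exists_delta (S := {q : I × (Fin m → I) | (P q.1 q.2).1 = 0}) hc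
    (isClosed_eq (continuous_fst.comp hc) continuous_const)
    (fun q hq h2 => h0 q.1 q.2 (Prod.ext hq h2))
  obtain ⟨δ₂, hδ₂, h2⟩ := exists_delta
    (S := {q : I × (Fin m → I) | (P q.1 q.2).1 ≤ 0 ∧ q.2 ∈ Cube.boundary (Fin m)}) hc
    ((isClosed_le (continuous_fst.comp hc) continuous_const).inter
      (isClosed_boundary.preimage continuous_snd))
    (fun q hq => hb q.1 q.2 hq.2 hq.1)
  obtain ⟨ε₁, hε₁, h⟩ := h
  refine ⟨min ε₁ (min δ₁ δ₂), by positivity, fun ε hε hle g hg => ?_⟩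
  have hl1 := hle.trans (min_le_left _ _)
  have hl2 := (hle.trans (min_le_right _ _)).trans (min_le_left _ _)
  have hl3 := (hle.trans (min_le_right _ _)).trans (min_le_right _ _)
  have hcont : Continuous fun q : I × (Fin m → I) => collapse ε (P q.1 q.2) :=
    continuous_collapse continuous_const hc (fun _ => hε) (fun q hq => hl2.trans (h1 q hq))
  have hbd : ∀ t, ∀ z ∈ Cube.boundary (Fin m), collapse ε (P t z) = base m := fun t z hz =>
    collapse_of_le hε fun hn => hl3.trans (h2 (t, z) ⟨hn, hz⟩)
  let g₁ : Ω^ (Fin m) (X m) (base m) := ⟨⟨fun z => collapse ε (P 1 z),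
    hcont.comp (by fun_prop : Continuous fun z : Fin m → I => ((1 : I), z))⟩, hbd 1⟩
  have : cls g = cls g₁ := cls_eq <| homotopic_of _ _ (fun t z => collapse ε (P t z)) hcont
    (fun z => (hg z).symm) (fun z => rfl) hbd
  rw [this]
  exact h ε hε hl1 g₁ fun z => rfl

lemma good_of_forall_InU {p : (Fin m → I) → V m} (hp : Continuous p) (h : ∀ z, InU (p z)) :
    Good p := by
  obtain ⟨δ, hδ, h1⟩ := exists_delta (S := {z | (p z).1 ≤ 0}) hp
    (isClosed_le (continuous_fst.comp hp) continuous_const) (fun z hz => h z hz)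
  refine ⟨δ, hδ, fun ε hε hle g hg => ?_⟩
  have : g = GenLoop.const := by
    ext1 z
    rw [hg z, collapse_of_le hε fun hn => hle.trans (h1 z hn)]; rfl
  rw [this]
  exact Subgroup.one_mem _

/-- If `p` sends the wall `z i = c` off the negative half axis, thin collapses of `p` are constant
on the wall, so that `p` may be treated on each side of it separately. -/
lemma good_split {p : (Fin m → I) → V m} (hp : Continuous p) (i : Fin m) (c : I)
    (hw : ∀ z, z i = c → InU (p z)) (hL : Good fun z => p (leftMap i c z))
    (hR : Good fun z => p (rightMap i c z)) : Good p := by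
  obtain ⟨δ, hδ, h1⟩ := exists_delta (S := {z : Fin m → I | (p z).1 ≤ 0 ∧ z i = c}) hp
    ((isClosed_le (continuous_fst.comp hp) continuous_const).inter
      (isClosed_eq (continuous_apply i) continuous_const)) (fun z hz => hw z hz.2 hz.1)
  obtain ⟨ε₁, hε₁, hL⟩ := hL
  obtain ⟨ε₂, hε₂, hR⟩ := hR
  refine ⟨min δ (min ε₁ ε₂), by positivity, fun ε hε hle g hg => ?_⟩
  have hl1 := hle.trans (min_le_left _ _)
  have hl2 := (hle.trans (min_le_right _ _)).trans (min_le_left _ _)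
  have hl3 := (hle.trans (min_le_right _ _)).trans (min_le_right _ _)
  obtain ⟨gL, gR, h2, h3, h4⟩ := cls_split i c g fun z hz => by
    rw [hg, collapse_of_le hε fun hn => hl1.trans (h1 z ⟨hn, hz⟩)]
  rw [h4]
  exact Subgroup.mul_mem _ (hR ε hε hl3 gR fun z => by rw [h3, hg])
    (hL ε hε hl2 gL fun z => by rw [h2, hg])

/-! ### Linear maps -/

/-- Each change of sign inverts the class. -/
lemma cls_signLoop_aux (S : Finset (Fin m)) (hs : ∀ i, |(if i ∈ S then (-1 : ℝ) else 1)| = 1) :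
    cls (signLoop (fun i => if i ∈ S then (-1 : ℝ) else 1) hs) ∈
      Subgroup.zpowers (cls (gen m)) := by
  induction S using Finset.induction_on with
  | empty =>
    rw [signLoop_congr (s' := fun _ => 1) (by ext i; simp) _ (by simp)]
    exact Subgroup.mem_zpowers _
  | insert a S ha ih =>
    have hs' : ∀ i, |(if i ∈ S then (-1 : ℝ) else 1)| = 1 := by
      intro i; split_ifs <;> simp
    have key : signLoop (fun i => if i ∈ insert a S then (-1 : ℝ) else 1) hs =
        GenLoop.symmAt a (signLoop (fun i => if i ∈ S then (-1 : ℝ) else 1) hs') := by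
      ext1 z
      rw [symmAt_apply]
      apply Subtype.ext
      change wrap _ = wrap _
      congr 1
      ext j
      by_cases h : j = a
      · subst h
        simp [ha, center, unitInterval.coe_symm_eq]; ring
      · simp [h, center]
    rw [key, ← cls_inv]
    exact Subgroup.inv_mem _ (ih hs')

lemma cls_signLoop (s : Fin m → ℝ) (hs : ∀ i, |s i| = 1) :
    cls (signLoop s hs) ∈ Subgroup.zpowers (cls (gen m)) := by
  classical
  have : s = fun i => if i ∈ Finset.univ.filter (fun i => s i = -1) then (-1 : ℝ) else 1 := by
    ext i
    have := eq_or_eq_neg_of_abs_eq (hs i)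
    rcases this with h | h
    · rw [h]; norm_num [h]
    · simp [h]
  rw [signLoop_congr this hs (fun i => by split_ifs <;> simp)]
  exact cls_signLoop_aux _ _

lemma good_sign (s : Fin m → ℝ) (hs : ∀ i, |s i| = 1) :
    Good fun z : Fin m → I => ((-1, fun i => s i * ((z i : ℝ) - 1 / 2)) : V m) := by
  refine ⟨1 / 2, by norm_num, fun ε hε hle g hg => ?_⟩
  have he : ∀ t : I, 0 < (1 - t) * ε + t * (1 / 2) ∧ (1 - t) * ε + t * (1 / 2) ≤ 1 / 2 := by
    intro t
    have h1 := t.2.1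
    have h2 := t.2.2
    constructor
    · by_cases h : (t : ℝ) = 1
      · simp [h]
      · have : (t : ℝ) < 1 := lt_of_le_of_ne h2 h
        have := mul_pos (by linarith : 0 < 1 - (t : ℝ)) hε
        linarith
    · nlinarith
  have : cls g = cls (signLoop s hs) := cls_eq <| homotopic_of _ _ (fun (t : I) z =>
    collapse ((1 - t) * ε + t * (1 / 2)) ((-1, fun i => s i * ((z i : ℝ) - 1 / 2)) : V m)) ?_ ?_ ?_
      ?_
  · rw [this]; exact cls_signLoop s hs
  · apply continuous_collapse
    · fun_prop
    · fun_prop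
    · intro q; exact (he q.1).1
    · intro q hq; norm_num at hq
  · intro z; simp [hg]
  · intro z
    rw [collapse_of_neg (by norm_num)]
    apply Subtype.ext
    change wrap _ = wrap _
    congr 1
    ext i
    simp [center]; ring
  · intro t z hz
    apply collapse_of_le (he t).1
    intro _
    refine (he t).2.trans ?_
    have := one_le_norm_of_boundary hz s hs
    have h2 : (fun i => s i * center z i) = (2 : ℝ) • fun i => s i * ((z i : ℝ) - 1 / 2) := by
      ext i; simp [center]; ring
    rw [h2, norm_smul] at this
    norm_num at this ⊢
    linarith

/-- The case of an invertible affine map with an interior zero: deform the matrix to a diagonal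
matrix of signs while moving the zero to the centre of the cube. -/
lemma good_linear (A : Matrix (Fin m) (Fin m) ℝ) (hA : A.det ≠ 0) {x : Fin m → ℝ}
    (hx : ∀ i, 0 < x i ∧ x i < 1) :
    Good fun z : Fin m → I => ((-1, A.mulVec (toR z - x)) : V m) := by
  obtain ⟨s, γ, h1, h2, h3, h4, h5⟩ := exists_matrix_path A hA
  have key := good_of_homotopy (fun t z => ((-1, (γ t).mulVec (toR z -
    fun i => (1 - t) * x i + t * (1 / 2))) : V m)) ?_ ?_ ?_ ?_
  · convert key using 3
    simp [h3]
  · refine Continuous.prodMk continuous_const ?_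
    apply Continuous.matrix_mulVec
    · fun_prop
    · fun_prop
  · intro t z h
    have := congrArg Prod.fst h
    norm_num at this
  · intro t z hz _ h
    have := Matrix.eq_zero_of_mulVec_eq_zero (h5 t) h
    refine toR_ne_of_boundary hz (fun i => ?_) (sub_eq_zero.mp this)
    have h1 := t.2.1
    have h2 := t.2.2
    obtain ⟨h3, h4⟩ := hx i
    by_cases h : (t : ℝ) = 0
    · simp [h, h3, h4]
    · have : 0 < (t : ℝ) := lt_of_le_of_ne h1 (Ne.symm h)
      have h5 := mul_nonneg (by linarith : 0 ≤ 1 - (t : ℝ)) h3.le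
      have h6 := mul_nonneg (by linarith : 0 ≤ 1 - (t : ℝ)) (by linarith : 0 ≤ 1 - x i)
      constructor <;> nlinarith
  · convert good_sign s h1 using 3
    rw [h4]
    ext i
    simp [Matrix.mulVec_diagonal, toR]

end Good

/-! ### Affine rescalings of one coordinate -/

/-- The map `x ↦ a + d x` applied to the `i`-th coordinate. -/
def aff (i : Fin m) (a d : ℝ) (x : Fin m → ℝ) : Fin m → ℝ :=
  fun j => (if j = i then a else 0) + (if j = i then d else 1) * x j

/-- The derivative of `aff i a d`. -/
noncomputable def affD (i : Fin m) (d : ℝ) : (Fin m → ℝ) →L[ℝ] (Fin m → ℝ) :=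
  ContinuousLinearMap.pi fun j => (if j = i then d else 1) • ContinuousLinearMap.proj j

lemma aff_hasFDerivAt (i : Fin m) (a d : ℝ) (x : Fin m → ℝ) :
    HasFDerivAt (aff i a d) (affD i d) x := by
  rw [hasFDerivAt_pi']
  intro j
  have : HasFDerivAt (fun y : Fin m → ℝ => y j) (ContinuousLinearMap.proj (R := ℝ) j) x :=
    hasFDerivAt_apply j x
  exact (this.const_mul (if j = i then d else 1)).const_add _

@[fun_prop]
lemma aff_continuous (i : Fin m) (a d : ℝ) : Continuous (aff i a d) := by
  unfold aff; fun_prop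

lemma aff_contDiff (i : Fin m) (a d : ℝ) : ContDiff ℝ 2 (aff i a d) := by
  unfold aff; fun_prop

lemma aff_self (i : Fin m) (a d : ℝ) (x : Fin m → ℝ) : aff i a d x i = a + d * x i := by
  simp [aff]

lemma aff_of_ne {i j : Fin m} (h : j ≠ i) (a d : ℝ) (x : Fin m → ℝ) : aff i a d x j = x j := by
  simp [aff, h]

lemma aff_injective (i : Fin m) (a : ℝ) {d : ℝ} (hd : d ≠ 0) : Function.Injective (aff i a d) := by
  intro x y h
  ext j
  have := congrFun h j
  simp only [aff, add_right_inj] at this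
  split_ifs at this
  · exact mul_left_cancel₀ hd this
  · simpa using this

lemma affD_injective (i : Fin m) {d : ℝ} (hd : d ≠ 0) : Function.Injective (affD i d) := by
  intro x y h
  ext j
  have := congrFun h j
  simp only [affD, ContinuousLinearMap.coe_pi', smul_apply,
    ContinuousLinearMap.proj_apply, smul_eq_mul] at this
  split_ifs at this
  · exact mul_left_cancel₀ hd this
  · simpa using this

lemma affD_det (i : Fin m) (d : ℝ) : (affD i d).det = d := by
  have : (affD i d : (Fin m → ℝ) →ₗ[ℝ] (Fin m → ℝ)) =
      Matrix.toLin' (Matrix.diagonal fun j => if j = i then d else 1) := by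
    apply LinearMap.ext
    intro x; ext j
    by_cases h : j = i <;> simp [affD, Matrix.mulVec_diagonal, h]
  rw [ContinuousLinearMap.det, this, LinearMap.det_toLin', Matrix.det_diagonal]
  simp

lemma toR_leftMap (i : Fin m) (c : I) (z : Fin m → I) :
    toR (leftMap i c z) = aff i 0 c (toR z) := by
  ext j
  by_cases h : j = i
  · subst h; simp [toR, leftMap, aff_self]
  · simp [toR, leftMap, aff_of_ne h, Function.update_of_ne h]

lemma toR_rightMap (i : Fin m) (c : I) (z : Fin m → I) :
    toR (rightMap i c z) = aff i c (1 - c) (toR z) := by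
  ext j
  by_cases h : j = i
  · subst h; simp [toR, rightMap, aff_self, unitInterval.coe_symm_eq]; ring
  · simp [toR, rightMap, aff_of_ne h, Function.update_of_ne h]

lemma toR_mem (z : Fin m → I) : toR z ∈ Icc (0 : Fin m → ℝ) 1 :=
  ⟨fun i => (z i).2.1, fun i => (z i).2.2⟩

/-- The inverse of `toR` on the real unit cube. -/
def ofR (x : Fin m → ℝ) (hx : x ∈ Icc (0 : Fin m → ℝ) 1) : Fin m → I :=
  fun i => ⟨x i, hx.1 i, hx.2 i⟩

lemma toR_ofR (x : Fin m → ℝ) (hx : x ∈ Icc (0 : Fin m → ℝ) 1) : toR (ofR x hx) = x := rfl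

/-! ### Maps with finitely many nondegenerate zeros -/

/-- A map with a single nondegenerate zero `x₀` deforms to its linearization at `x₀`, by zooming in
on `x₀`. -/
lemma good_single [Nonempty (Fin m)] {p : (Fin m → ℝ) → V m} (hp : Continuous p)
    (h0 : ∀ x ∈ Icc (0 : Fin m → ℝ) 1, p x ≠ 0) {x₀ : Fin m → ℝ}
    (hx₀ : ∀ i, 0 < x₀ i ∧ x₀ i < 1)
    (huniq : ∀ x ∈ Icc (0 : Fin m → ℝ) 1, ¬ InU (p x) → x = x₀)
    (hneg : (p x₀).1 < 0) (hzero : (p x₀).2 = 0)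
    {A : (Fin m → ℝ) →L[ℝ] (Fin m → ℝ)} (hA : Function.Injective A)
    (hd : HasFDerivAt (fun x => (p x).2) A x₀) : Good fun z => p (toR z) := by
  let e : (Fin m → ℝ) → (Fin m → ℝ) := fun h => ‖h‖⁻¹ • ((p (x₀ + h)).2 - A h)
  have he0 : e 0 = 0 := by simp [e]
  have he : Continuous e := by
    rw [continuous_iff_continuousAt]
    intro h
    by_cases hh : h = 0
    · subst hh
      rw [ContinuousAt, he0]
      have := (hasFDerivAt_iff_tendsto.mp hd)
      rw [tendsto_zero_iff_norm_tendsto_zero]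
      have h2 : Filter.Tendsto (fun h : Fin m → ℝ => x₀ + h) (𝓝 0) (𝓝 x₀) := by
        have : Continuous (fun h : Fin m → ℝ => x₀ + h) := by fun_prop
        simpa using this.tendsto 0
      refine (this.comp h2).congr fun h => ?_
      simp [e, norm_smul, hzero]
    · have : ‖h‖ ≠ 0 := norm_ne_zero_iff.mpr hh
      have h1 : ContinuousAt (fun h : Fin m → ℝ => ‖h‖⁻¹) h :=
        continuous_norm.continuousAt.inv₀ this
      exact h1.smul (by fun_prop)
  have hAne : ∀ z : Fin m → I, toR z ≠ x₀ → A (toR z - x₀) ≠ 0 := fun z hz h =>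
    hz (sub_eq_zero.mp (hA (h.trans (map_zero A).symm)))
  -- the rescalings `p₂(x₀ + t h) / t` of the second component extend to `t = 0`
  let P : I → (Fin m → I) → V m := fun t z => ((p (x₀ + (t : ℝ) • (toR z - x₀))).1,
    A (toR z - x₀) + ‖toR z - x₀‖ • e ((t : ℝ) • (toR z - x₀)))
  have hPc : Continuous (Function.uncurry P) := by
    change Continuous fun q : I × (Fin m → I) =>
      ((p (x₀ + (q.1 : ℝ) • (toR q.2 - x₀))).1,
    A (toR q.2 - x₀) + ‖toR q.2 - x₀‖ • e ((q.1 : ℝ) • (toR q.2 - x₀)))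
    fun_prop
  have hseg : ∀ (t : I) (z : Fin m → I), x₀ + (t : ℝ) • (toR z - x₀) ∈ Icc (0 : Fin m → ℝ) 1 := by
    intro t z
    have hm : x₀ ∈ Icc (0 : Fin m → ℝ) 1 := ⟨fun i => (hx₀ i).1.le, fun i => (hx₀ i).2.le⟩
    exact (convex_Icc 0 1).add_smul_sub_mem hm (toR_mem z) t.2
  have hPt : ∀ (t : I) z, (t : ℝ) ≠ 0 →
      (t : ℝ) • (P t z).2 = (p (x₀ + (t : ℝ) • (toR z - x₀))).2 := by
    intro t z ht
    by_cases hh : toR z - x₀ = 0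
    · simp [P, hh, hzero]
    · have hn : ‖toR z - x₀‖ ≠ 0 := norm_ne_zero_iff.mpr hh
      have ht' : |(t : ℝ)| = t := abs_of_nonneg t.2.1
      simp only [P, e, norm_smul, Real.norm_eq_abs, ht', map_smul, smul_add, smul_smul]
      have : (t : ℝ) * (‖toR z - x₀‖ * (t * ‖toR z - x₀‖)⁻¹) = 1 := by field_simp
      rw [this, one_smul]; abel
  have hP0 : ∀ z, P 0 z = ((p x₀).1, A (toR z - x₀)) := by
    intro z; simp [P, he0]
  have key0 : Good (P 0) := by
    have hdet : (LinearMap.toMatrix' (A : (Fin m → ℝ) →ₗ[ℝ] (Fin m → ℝ))).det ≠ 0 := by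
      rw [LinearMap.det_toMatrix']
      intro h
      have := LinearMap.bot_lt_ker_of_det_eq_zero h
      rw [LinearMap.ker_eq_bot.mpr hA] at this
      exact lt_irrefl _ this
    have hg := good_of_homotopy (fun t z =>
      (((1 - t) * (p x₀).1 + t * (-1), A (toR z - x₀)) : V m)) (by fun_prop) ?_ ?_ ?_
    · convert hg using 2 with z
      rw [hP0]; simp
    · intro t z h
      have h1 := congrArg Prod.fst h
      simp only [Prod.fst_zero] at h1
      have h2 := t.2.1
      have h3 := t.2.2
      by_cases h : (t : ℝ) = 1
      · simp [h] at h1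
      · have : (t : ℝ) < 1 := lt_of_le_of_ne h3 h
        nlinarith
    · intro t z hz _
      exact hAne z (toR_ne_of_boundary hz hx₀)
    · convert good_linear _ hdet hx₀ using 3 with z
      · simp
      · rw [LinearMap.toMatrix'_mulVec]; rfl
  have hg := good_of_homotopy (fun t => P (σ t)) ?_ ?_ ?_ ?_
  · convert hg using 2 with z
    refine Prod.ext ?_ ?_
    · simp [P]
    · have := hPt 1 z (by simp)
      simpa using this.symm
  · exact hPc.comp (by fun_prop : Continuous fun q : I × (Fin m → I) => (σ q.1, q.2))
  · intro t z h
    generalize σ t = t at h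
    by_cases ht : (t : ℝ) = 0
    · have : t = 0 := Subtype.ext ht
      subst this
      rw [hP0] at h
      have h1 := congrArg Prod.fst h
      simp only [Prod.fst_zero] at h1
      exact hneg.ne h1
    · have h2 := hPt t z ht
      rw [h] at h2
      have h1 := congrArg Prod.fst h
      exact h0 _ (hseg t z) (Prod.ext h1 (by simpa using h2.symm))
  · intro t z hz hle h
    generalize σ t = t at h hle
    have hne := toR_ne_of_boundary hz hx₀
    by_cases ht : (t : ℝ) = 0
    · have : t = 0 := Subtype.ext ht
      subst this
      rw [hP0] at h
      exact hAne z hne h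
    · have h2 := hPt t z ht
      rw [h, smul_zero] at h2
      have := huniq _ (hseg t z) (fun hU => hU hle h2.symm)
      have h3 : (t : ℝ) • (toR z - x₀) = 0 := by simpa using this
      rcases smul_eq_zero.mp h3 with h3 | h3
      · exact ht h3
      · exact hne (sub_eq_zero.mp h3)
  · simpa using key0

/-- The zeros of `p` in the cube: the points sent to the closed negative half axis. -/
def zeros (p : (Fin m → ℝ) → V m) : Set (Fin m → ℝ) :=
  {x | x ∈ Icc (0 : Fin m → ℝ) 1 ∧ ¬ InU (p x)}

/-- The maps avoiding the origin all of whose zeros are nondegenerate, interior and finite in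
number. -/
structure Transverse (p : (Fin m → ℝ) → V m) : Prop where
  cont : Continuous p
  ne_zero : ∀ x ∈ Icc (0 : Fin m → ℝ) 1, p x ≠ 0
  boundary : ∀ z ∈ Cube.boundary (Fin m), InU (p (toR z))
  deriv : ∀ x ∈ zeros p, ∃ A : (Fin m → ℝ) →L[ℝ] (Fin m → ℝ), Function.Injective A ∧
    HasFDerivAt (fun x => (p x).2) A x
  finite : (zeros p).Finite

lemma aff_mem {i : Fin m} {a d : ℝ} (ha : 0 ≤ a) (hd : 0 < d) (had : a + d ≤ 1)
    {x : Fin m → ℝ} (hx : x ∈ Icc (0 : Fin m → ℝ) 1) : aff i a d x ∈ Icc (0 : Fin m → ℝ) 1 := by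
  refine ⟨fun j => ?_, fun j => ?_⟩
  all_goals
    have h1 : 0 ≤ x j := hx.1 j
    have h2 : x j ≤ 1 := hx.2 j
    by_cases h : j = i
    · subst h
      rw [aff_self]
      simp only [Pi.zero_apply, Pi.one_apply]
      nlinarith
    · rw [aff_of_ne h]; assumption

/-- Restricting a transverse map to a slab of the cube missing one of the zeros reduces the number
of zeros. -/
lemma Transverse.comp_aff {p : (Fin m → ℝ) → V m} (h : Transverse p) {i : Fin m} {a d : ℝ}
    (ha : 0 ≤ a) (hd : 0 < d) (had : a + d ≤ 1)
    (hb : ∀ z ∈ Cube.boundary (Fin m), InU (p (aff i a d (toR z)))) {w : Fin m → ℝ}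
    (hw : w ∈ zeros p) (hw' : ∀ x ∈ Icc (0 : Fin m → ℝ) 1, aff i a d x ≠ w) :
    Transverse (fun x => p (aff i a d x)) ∧
      (zeros fun x => p (aff i a d x)).ncard < (zeros p).ncard := by
  have hmaps : ∀ x ∈ zeros (fun x => p (aff i a d x)), aff i a d x ∈ zeros p := fun x hx =>
    ⟨aff_mem ha hd had hx.1, hx.2⟩
  have hinj := aff_injective i a hd.ne'
  refine ⟨⟨h.cont.comp (by fun_prop), fun x hx => h.ne_zero _ (aff_mem ha hd had hx), hb,
    fun x hx => ?_, ?_⟩, ?_⟩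
  · obtain ⟨A, hA, hA'⟩ := h.deriv _ (hmaps x hx)
    exact ⟨A.comp (affD i d), hA.comp (affD_injective i hd.ne'),
      HasFDerivAt.comp x hA' (aff_hasFDerivAt i a d x)⟩
  · exact h.finite.of_injOn (f := aff i a d) hmaps hinj.injOn
  · rw [← Set.ncard_image_of_injective _ hinj]
    refine Set.ncard_lt_ncard ⟨?_, fun hsub => ?_⟩ h.finite
    · rintro _ ⟨x, hx, rfl⟩; exact hmaps x hx
    · obtain ⟨x, hx, hxw⟩ := hsub hw
      exact hw' x hx.1 hxw

/-- Induction on the number of zeros, separating two zeros by a wall which contains none. -/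
lemma Transverse.good [Nonempty (Fin m)] (k : ℕ) :
    ∀ p : (Fin m → ℝ) → V m, Transverse p → (zeros p).ncard = k → Good fun z => p (toR z) := by
  induction k using Nat.strong_induction_on with
  | _ k ih =>
  intro p hp hk
  have hcont : Continuous fun z : Fin m → I => p (toR z) := hp.cont.comp continuous_toR
  rcases (zeros p).eq_empty_or_nonempty with hZ | ⟨x₀, hx₀⟩
  · refine good_of_forall_InU hcont fun z => ?_
    by_contra hz
    have : toR z ∈ zeros p := ⟨toR_mem z, hz⟩
    rw [hZ] at this; exact this
  by_cases hsub : ∀ x ∈ zeros p, x = x₀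
  · obtain ⟨A, hA, hA'⟩ := hp.deriv x₀ hx₀
    have h1 := hx₀.2
    simp only [InU, not_forall, not_not] at h1
    obtain ⟨hle, h2⟩ := h1
    refine good_single hp.cont hp.ne_zero (fun i => ?_) (fun x hx hU => hsub x ⟨hx, hU⟩)
      (lt_of_le_of_ne hle fun h => hp.ne_zero x₀ hx₀.1 (Prod.ext h h2)) h2 hA hA'
    have hnb : ofR x₀ hx₀.1 ∉ Cube.boundary (Fin m) := fun hb => hx₀.2 (hp.boundary _ hb)
    constructor
    · refine lt_of_le_of_ne (hx₀.1.1 i) fun h => hnb ⟨i, Or.inl (Subtype.ext h.symm)⟩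
    · refine lt_of_le_of_ne (hx₀.1.2 i) fun h => hnb ⟨i, Or.inr (Subtype.ext h)⟩
  · -- separate two zeros by a wall without zeros
    obtain ⟨u, hu, w, hw, i, hlt⟩ : ∃ u ∈ zeros p, ∃ w ∈ zeros p, ∃ i, u i < w i := by
      push Not at hsub
      obtain ⟨x, hx, hne⟩ := hsub
      obtain ⟨i, hi⟩ := Function.ne_iff.mp hne
      rcases lt_or_gt_of_ne hi with h | h
      · exact ⟨x, hx, x₀, hx₀, i, h⟩
      · exact ⟨x₀, hx₀, x, hx, i, h⟩
    obtain ⟨c, ⟨hc1, hc2⟩, hc⟩ :=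
      (Ioo_infinite hlt).exists_notMem_finite (hp.finite.image fun x => x i)
    have hc0 : 0 < c := lt_of_le_of_lt (hu.1.1 i) hc1
    have hc3 : c < 1 := lt_of_lt_of_le hc2 (hw.1.2 i)
    let c' : I := ⟨c, hc0.le, hc3.le⟩
    have hwall : ∀ z : Fin m → I, z i = c' → InU (p (toR z)) := by
      intro z hz
      by_contra hU
      refine hc ⟨toR z, ⟨toR_mem z, hU⟩, ?_⟩
      simp [toR, hz, c']
    obtain ⟨hL, hL'⟩ := hp.comp_aff (i := i) (a := 0) (d := c) le_rfl hc0 (by linarith)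
      (fun z hz => by
        have := (leftMap_boundary i c' hz).elim (hwall _) (hp.boundary _)
        rwa [toR_leftMap] at this) hw (fun x hx h => by
        have h1 := congrFun h i
        rw [aff_self] at h1
        have h2 : x i ≤ 1 := hx.2 i
        nlinarith)
    obtain ⟨hR, hR'⟩ := hp.comp_aff (i := i) (a := c) (d := 1 - c) hc0.le (by linarith)
      (by linarith) (fun z hz => by
        have := (rightMap_boundary i c' hz).elim (hwall _) (hp.boundary _)
        rwa [toR_rightMap] at this) hu (fun x hx h => by
        have h1 := congrFun h i
        rw [aff_self] at h1
        have h2 : 0 ≤ x i := hx.1 i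
        nlinarith)
    refine good_split hcont i c' hwall ?_ ?_
    · simp only [toR_leftMap]
      exact ih _ (hk ▸ hL') _ hL rfl
    · simp only [toR_rightMap]
      exact ih _ (hk ▸ hR') _ hR rfl

/-! ### Smooth approximation and general position -/

lemma exists_smooth_approx {f : (Fin m → I) → V m} (hf : Continuous f) {δ : ℝ} (hδ : 0 < δ) :
    ∃ p : (Fin m → ℝ) → V m, ContDiff ℝ 2 p ∧ ∀ z, ‖p (toR z) - (f z : V m)‖ < δ := by
  obtain ⟨g, h1, h2, -⟩ := Continuous.exists_contDiff_approx
    (f := fun x : Fin m → ℝ => f fun i => projIcc (0 : ℝ) 1 zero_le_one (x i))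
    (ε := fun _ => δ) 2 (hf.comp (continuous_pi fun i =>
      continuous_projIcc.comp (continuous_apply i))) continuous_const (fun _ => hδ)
  refine ⟨g, h1, fun z => ?_⟩
  have := h2 (toR z)
  rw [dist_eq_norm] at this
  simpa [toR] using this

/-- A consequence of Sard's theorem: small translations of a `C²` map have `0` as a regular
value. -/
lemma exists_regular {q : (Fin m → ℝ) → (Fin m → ℝ)} (hq : ContDiff ℝ 2 q) {δ : ℝ} (hδ : 0 < δ) :
    ∃ y, ‖y‖ < δ ∧ ∀ x, q x = y → (fderiv ℝ q x).det ≠ 0 := by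
  have hd : Differentiable ℝ q := hq.differentiable (by norm_num)
  have h0 := MeasureTheory.addHaar_image_eq_zero_of_det_fderivWithin_eq_zero
    (MeasureTheory.volume : MeasureTheory.Measure (Fin m → ℝ)) (f := q) (f' := fderiv ℝ q)
    (s := {x | (fderiv ℝ q x).det = 0})
    (fun x _ => (hd x).hasFDerivAt.hasFDerivWithinAt) (fun x hx => hx)
  by_contra hcon
  push Not at hcon
  have hsub : Metric.ball (0 : Fin m → ℝ) δ ⊆ q '' {x | (fderiv ℝ q x).det = 0} := by
    intro y hy
    obtain ⟨x, hx, hx'⟩ := hcon y (mem_ball_zero_iff.mp hy)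
    exact ⟨x, hx', hx⟩
  have := MeasureTheory.measure_mono_null hsub h0
  exact (Metric.measure_ball_pos MeasureTheory.volume (0 : Fin m → ℝ) hδ).ne' this

lemma injective_of_det_ne_zero {A : (Fin m → ℝ) →L[ℝ] (Fin m → ℝ)} (h : A.det ≠ 0) :
    Function.Injective A := by
  have : Function.Injective (A : (Fin m → ℝ) →ₗ[ℝ] (Fin m → ℝ)) := by
    rw [← LinearMap.ker_eq_bot]
    by_contra hk
    exact h (LinearMap.det_eq_zero_iff_ker_ne_bot.mpr hk)
  exact this

/-- Nondegenerate zeros are isolated, hence finite in number by compactness. -/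
lemma zeros_finite {p : (Fin m → ℝ) → V m} (hp : Continuous p)
    (hd : ∀ x ∈ zeros p, ∃ A : (Fin m → ℝ) →L[ℝ] (Fin m → ℝ), Function.Injective A ∧
      HasFDerivAt (fun x => (p x).2) A x) : (zeros p).Finite := by
  have hz : zeros p = Icc (0 : Fin m → ℝ) 1 ∩ ({x | (p x).1 ≤ 0} ∩ {x | (p x).2 = 0}) := by
    ext x
    simp [zeros, InU]
  have hclosed : IsClosed ({x | (p x).1 ≤ 0} ∩ {x | (p x).2 = 0}) :=
    (isClosed_le (by fun_prop) continuous_const).inter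
      (isClosed_eq (by fun_prop) continuous_const)
  have hK : IsCompact (zeros p) := by
    rw [hz]; exact isCompact_Icc.inter_right hclosed
  refine hK.finite ⟨?_⟩
  rw [discreteTopology_subtype_iff]
  intro x hx
  obtain ⟨A, hA, hA'⟩ := hd x hx
  have hanti : ∃ C, AntilipschitzWith C A := by
    obtain ⟨K, -, hK⟩ := (A : (Fin m → ℝ) →ₗ[ℝ] (Fin m → ℝ)).exists_antilipschitzWith
      (LinearMap.ker_eq_bot.mpr hA)
    exact ⟨K, hK⟩
  have hev := hA'.eventually_ne (c := 0) hanti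
  rw [Filter.inf_principal_eq_bot]
  filter_upwards [hev] with y hy hyz
  rw [hz] at hyz
  exact hy hyz.2.2

lemma continuous_coe_loop (f : Ω^ (Fin m) (X m) (base m)) :
    Continuous fun z => ((f z : X m) : V m) := continuous_subtype_val.comp f.1.continuous

/-- A loop outside the open unit ball is homotopic to its collapse, and the latter to a thin collapse
of a transverse approximation. -/
lemma mem_zpowers_of_one_le [Nonempty (Fin m)] (f : Ω^ (Fin m) (X m) (base m))
    (hf : ∀ z, 1 ≤ ‖(f z : V m)‖) :
    cls f ∈ Subgroup.zpowers (cls (gen m)) := by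
  have hfc := continuous_coe_loop f
  obtain ⟨p₁, hp₁, hpf⟩ := exists_smooth_approx hfc (by norm_num : (0 : ℝ) < 1 / 4)
  obtain ⟨y₀, hy₀, hreg⟩ := exists_regular (q := fun x => (p₁ x).2) (by fun_prop)
    (by norm_num : (0 : ℝ) < 1 / 4)
  let p : (Fin m → ℝ) → V m := fun x => ((p₁ x).1, (p₁ x).2 - y₀)
  have hpc : Continuous p := by
    have := hp₁.continuous
    simp only [p]; fun_prop
  have hclose : ∀ z, ‖p (toR z) - (f z : V m)‖ < 1 / 2 := by
    intro z
    have h1 : p (toR z) - (f z : V m) = (p₁ (toR z) - (f z : V m)) - (0, y₀) := by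
      ext <;> simp [p]; ring
    have h2 : ‖((0, y₀) : V m)‖ < 1 / 4 := by
      rw [Prod.norm_def]; simpa using hy₀
    rw [h1]
    refine (norm_sub_le _ _).trans_lt ?_
    linarith [hpf z]
  have hmix : ∀ (t : I) z, 1 / 2 < ‖((f z : X m) : V m) + (t : ℝ) • (p (toR z) - (f z : V m))‖ := by
    intro t z
    have h1 : ‖(t : ℝ) • (p (toR z) - (f z : V m))‖ < 1 / 2 := by
      rw [norm_smul, Real.norm_of_nonneg t.2.1]
      have := t.2.1
      have := t.2.2
      nlinarith [hclose z, norm_nonneg (p (toR z) - (f z : V m))]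
    have h2 := norm_sub_norm_le (f z : V m) (-((t : ℝ) • (p (toR z) - (f z : V m))))
    rw [norm_neg, sub_neg_eq_add] at h2
    linarith [hf z]
  have hbd : ∀ (t : I), ∀ z ∈ Cube.boundary (Fin m),
      0 < (((f z : X m) : V m) + (t : ℝ) • (p (toR z) - (f z : V m))).1 := by
    intro t z hz
    have hfz : f z = base m := GenLoop.boundary f z hz
    have h1 : |(p (toR z) - (f z : V m)).1| < 1 / 2 := (norm_fst_le _).trans_lt (hclose z)
    rw [hfz] at h1 ⊢
    have h2 := (abs_lt.mp h1).1
    have := t.2.1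
    have := t.2.2
    simp only [Prod.fst_add, Prod.smul_fst, smul_eq_mul]
    change 0 < 1 + _
    nlinarith
  have htr : Transverse p := by
    have hbd1 : ∀ z ∈ Cube.boundary (Fin m), InU (p (toR z)) := by
      intro z hz hle
      have := hbd 1 z hz
      simp only [Icc.coe_one, one_smul, add_sub_cancel] at this
      exact absurd hle (not_le.mpr this)
    have hder : ∀ x ∈ zeros p, ∃ A : (Fin m → ℝ) →L[ℝ] (Fin m → ℝ), Function.Injective A ∧
        HasFDerivAt (fun x => (p x).2) A x := by
      intro x hx
      have h1 := hx.2
      simp only [InU, not_forall, not_not] at h1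
      obtain ⟨-, h2⟩ := h1
      refine ⟨_, injective_of_det_ne_zero (hreg x (sub_eq_zero.mp h2)), ?_⟩
      have : Differentiable ℝ fun x => (p₁ x).2 := by
        have := hp₁.differentiable (by norm_num)
        fun_prop
      exact (this x).hasFDerivAt.sub_const y₀
    refine ⟨hpc, fun x hx h => ?_, hbd1, hder, zeros_finite hpc hder⟩
    have := hmix 1 (ofR x hx)
    simp only [Icc.coe_one, one_smul, add_sub_cancel, toR_ofR, h, norm_zero] at this
    norm_num at this
  obtain ⟨ε₀, hε₀, hgood⟩ := Transverse.good _ p htr rfl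
  -- first collapse along radius `1/2`, then move `f` to `p` while shrinking the radius
  have hεp : 0 < min ε₀ (1 / 2) := by positivity
  obtain ⟨ε, hε⟩ : ∃ ε, ε = min ε₀ (1 / 2) := ⟨_, rfl⟩
  rw [← hε] at hεp
  have hε1 : ε ≤ ε₀ := hε ▸ min_le_left _ _
  have hε2 : ε ≤ 1 / 2 := hε ▸ min_le_right _ _
  let e : I → ℝ := fun t => (1 - t) * (1 / 2) + t * ε
  have he : ∀ t, 0 < e t ∧ e t ≤ 1 / 2 := by
    intro t
    have h1 := t.2.1
    have h2 := t.2.2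
    simp only [e]
    constructor
    · by_cases h : (t : ℝ) = 0
      · simp [h]
      · have : 0 < (t : ℝ) := lt_of_le_of_ne h1 (Ne.symm h)
        nlinarith [mul_pos this hεp]
    · nlinarith
  have hcont : Continuous fun q : I × (Fin m → I) =>
      collapse (e q.1) (((f q.2 : X m) : V m) + (q.1 : ℝ) • (p (toR q.2) - (f q.2 : V m))) := by
    refine continuous_collapse (by simp only [e]; fun_prop) ?_ (fun q => (he q.1).1) ?_
    · have := hfc.comp (continuous_snd (X := I) (Y := Fin m → I))
      fun_prop
    · intro q hq
      refine (he q.1).2.trans ?_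
      have := hmix q.1 q.2
      rw [Prod.norm_def, hq, norm_zero] at this
      rcases lt_max_iff.mp this with h | h
      · norm_num at h
      · exact h.le
  let F : I → Ω^ (Fin m) (X m) (base m) := fun t => ⟨⟨fun z => collapse (e t)
    (((f z : X m) : V m) + (t : ℝ) • (p (toR z) - (f z : V m))), hcont.comp (by fun_prop : Continuous
      fun z : Fin m → I => (t, z))⟩, fun z hz => collapse_of_nonneg (hbd t z hz).le⟩
  have h01 : cls (F 0) = cls (F 1) := cls_eq <| homotopic_of _ _
    (fun t z => F t z) hcont (fun _ => rfl) (fun _ => rfl) (fun t => (F t).2)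
  have hF1 : cls (F 1) ∈ Subgroup.zpowers (cls (gen m)) := by
    refine hgood ε hεp hε1 (F 1) fun z => ?_
    change collapse (e 1) _ = _
    simp [e]
  have hF0 : ∀ z, F 0 z = collapse (1 / 2) (f z : V m) := fun z => by
    change collapse (e 0) _ = _
    simp [e]
  -- the segment from `f z` to its collapse avoids the origin
  have hseg : ∀ (t : I) z, ((f z : X m) : V m) + (t : ℝ) • ((F 0 z : V m) - (f z : V m)) ≠ 0 := by
    intro t z h
    have ht0 := t.2.1
    have ht1 := t.2.2
    have hn := hf z
    rw [hF0] at h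
    obtain ⟨y, hy⟩ : ∃ y : V m, y = (f z : V m) := ⟨_, rfl⟩
    rw [← hy] at h hn
    have hy1 := congrArg Prod.fst h
    have hy2 := congrArg Prod.snd h
    by_cases h0 : 0 ≤ y.1
    · rw [collapse_of_nonneg h0] at hy1 hy2
      simp only [Prod.fst_add, Prod.smul_fst, Prod.fst_sub, Prod.snd_add, Prod.smul_snd,
        Prod.snd_sub, base, smul_eq_mul, Prod.fst_zero, Prod.snd_zero, zero_sub] at hy1 hy2
      have h1 : (1 - (t : ℝ)) • y.2 = 0 := by rw [← hy2]; module
      rcases smul_eq_zero.mp h1 with h2 | h2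
      · nlinarith
      · rw [Prod.norm_def, h2, norm_zero, Real.norm_of_nonneg h0] at hn
        have : 1 ≤ y.1 := by
          rcases le_max_iff.mp hn with h | h
          · exact h
          · norm_num at h
        nlinarith
    · push Not at h0
      rw [collapse_of_neg h0] at hy1 hy2
      simp only [Prod.fst_add, Prod.smul_fst, Prod.fst_sub, Prod.snd_add, Prod.smul_snd,
        Prod.snd_sub, wrap, smul_eq_mul, Prod.fst_zero, Prod.snd_zero] at hy1 hy2
      have hB := (bumpB m).nonneg' (((1 / 2 : ℝ)⁻¹) • y.2)
      set b := bumpB m (((1 / 2 : ℝ)⁻¹) • y.2) with hb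
      have h1 : ((1 - (t : ℝ)) + t * (6 * b)) • y.2 = 0 := by
        rw [← hy2]; norm_num; module
      rcases smul_eq_zero.mp h1 with h2 | h2
      · have h3 : (t : ℝ) = 1 := by nlinarith [mul_nonneg ht0 hB]
        have h4 : b = 0 := by rw [h3] at h2; linarith
        have h5 : ¬ ‖((1 / 2 : ℝ)⁻¹) • y.2‖ ≤ 2 / 3 := fun h => by
          have := bumpB_eq_one h
          rw [← hb] at this; linarith
        rw [bumpA_eq_zero (le_of_not_ge h5), h3] at hy1
        linarith
      · rw [h2, smul_zero, bumpA_eq_one (by simp)] at hy1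
        rw [Prod.norm_def, h2, norm_zero, Real.norm_of_nonpos h0.le] at hn
        have : 1 ≤ -y.1 := by
          rcases le_max_iff.mp hn with h | h
          · exact h
          · norm_num at h
        nlinarith
  have hf0 : cls f = cls (F 0) := cls_eq <| homotopic_of _ _
    (fun t z => ⟨((f z : X m) : V m) + (t : ℝ) • ((F 0 z : V m) - (f z : V m)), hseg t z⟩) (by
      refine Continuous.subtype_mk ?_ _
      have h1 := hfc.comp (continuous_snd (X := I) (Y := Fin m → I))
      have h2 := (continuous_coe_loop (F 0)).comp (continuous_snd (X := I) (Y := Fin m → I))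
      simp only [Function.comp_def] at h1 h2
      fun_prop)
    (fun z => by simp) (fun z => by simp) (fun t z hz => by
      apply Subtype.ext
      change ((f z : X m) : V m) + (t : ℝ) • ((F 0 z : V m) - (f z : V m)) = (base m : V m)
      rw [GenLoop.boundary f z hz, GenLoop.boundary (F 0) z hz]; simp)
  rw [hf0, h01]
  exact hF1

/-! ### The degree integral -/

/-- A smooth cutoff near the negative half axis. -/
noncomputable def bumpC (m : ℕ) : ContDiffBump (0 : Fin m → ℝ) :=
  ⟨1 / 4, 1 / 2, by norm_num, by norm_num⟩

/-- A smooth nonnegative function on `ℝ × ℝᵐ`, supported near the negative half axis and, away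
from the ball of radius `3/4`, locally constant in the first coordinate. -/
noncomputable def rho (y : V m) : ℝ := bumpC m y.2 * Real.smoothTransition (1 / 2 - 2 * y.1)

lemma rho_contDiff : ContDiff ℝ 2 (rho (m := m)) := by
  have h1 : ContDiff ℝ 2 (bumpC m) := (bumpC m).contDiff
  have h2 : ContDiff ℝ 2 Real.smoothTransition := Real.smoothTransition.contDiff (n := 2)
  unfold rho; fun_prop

lemma rho_nonneg (y : V m) : 0 ≤ rho y :=
  mul_nonneg (bumpC m).nonneg (Real.smoothTransition.nonneg _)

lemma rho_eq_zero {y : V m} (h : 1 / 4 ≤ y.1) : rho y = 0 := by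
  unfold rho
  rw [Real.smoothTransition.zero_of_nonpos (by linarith), mul_zero]

lemma fderiv_rho_fst {y : V m} (h : 3 / 4 ≤ ‖y‖) : fderiv ℝ rho y (1, 0) = 0 := by
  have h1 : HasFDerivAt rho (fderiv ℝ rho y) y :=
    (rho_contDiff.differentiable (by norm_num) y).hasFDerivAt
  have h2 : HasDerivAt (fun s : ℝ => rho (y + s • ((1, 0) : V m))) (fderiv ℝ rho y (1, 0)) 0 :=
    h1.hasLineDerivAt (1, 0)
  have h3 : (fun s : ℝ => rho (y + s • ((1, 0) : V m))) =ᶠ[𝓝 0] fun _ => rho y := by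
    have hcont : Continuous fun s : ℝ => y.1 + s := by fun_prop
    rw [Prod.norm_def] at h
    rcases le_max_iff.mp h with h | h
    · rcases le_abs.mp h with h | h
      · have : ∀ᶠ s in 𝓝 (0 : ℝ), 1 / 4 < y.1 + s :=
          hcont.continuousAt.eventually_const_lt (by simp; linarith)
        filter_upwards [this] with s hs
        rw [rho_eq_zero (by simp; linarith), rho_eq_zero (by linarith)]
      · have : ∀ᶠ s in 𝓝 (0 : ℝ), y.1 + s < -(1 / 4) :=
          hcont.continuousAt.eventually_lt_const (by simp; linarith)
        filter_upwards [this] with s hs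
        simp only [rho, Prod.fst_add, Prod.snd_add, Prod.smul_fst, Prod.smul_snd, smul_eq_mul,
          mul_one, smul_zero, add_zero]
        rw [Real.smoothTransition.one_of_one_le (by linarith),
          Real.smoothTransition.one_of_one_le (by linarith)]
    · refine Filter.Eventually.of_forall fun s => ?_
      have : bumpC m y.2 = 0 := (bumpC m).zero_of_le_dist (by
        rw [dist_zero_right]; change 1 / 2 ≤ _; linarith)
      simp [rho, this]
  exact h2.unique ((hasDerivAt_const (0 : ℝ) (rho y)).congr_of_eventuallyEq h3)

/-- The pullback of the form `ρ dy₁ ∧ ⋯ ∧ dyₘ` by `p`, as a function. -/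
noncomputable def jac (p : (Fin m → ℝ) → V m) (x : Fin m → ℝ) : ℝ :=
  rho (p x) * (Matrix.of fun a => (fderiv ℝ p x (Pi.single a 1)).2).det

/-- The integral over the cube of the pullback of `ρ dy₁ ∧ ⋯ ∧ dyₘ`. -/
noncomputable def degI (p : (Fin m → ℝ) → V m) : ℝ := ∫ x in Icc (0 : Fin m → ℝ) 1, jac p x

/-- The determinant of a square matrix as a continuous multilinear function of its rows. -/
noncomputable def detC (k : ℕ) : ContinuousMultilinearMap ℝ (fun _ : Fin k => Fin k → ℝ) ℝ :=
  ⟨(Matrix.detRowAlternating (n := Fin k) (R := ℝ)).toMultilinearMap, by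
    change Continuous fun M : Matrix (Fin k) (Fin k) ℝ => M.det
    fun_prop⟩

lemma detC_apply (k : ℕ) (M : Fin k → Fin k → ℝ) : detC k M = (Matrix.of M).det := rfl

/-- The rows `(0, E a)`. -/
def padRows (E : Fin (m + 1) → Fin m → ℝ) (a : Fin (m + 1)) : Fin (m + 1) → ℝ := Fin.cons 0 (E a)

lemma det_cons (r : Fin (m + 1) → ℝ) (E : Fin (m + 1) → Fin m → ℝ) :
    (Matrix.of fun a => (Fin.cons (r a) (E a) : Fin (m + 1) → ℝ)).det =
      ∑ i : Fin (m + 1), (-1) ^ (i : ℕ) * r i * (Matrix.of fun a => E (i.succAbove a)).det := by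
  rw [Matrix.det_succ_column_zero]
  refine Finset.sum_congr rfl fun i _ => ?_
  simp only [Matrix.of_apply, Fin.cons_zero]
  congr 1

lemma detC_update (E : Fin (m + 1) → Fin m → ℝ) (i : Fin (m + 1)) :
    detC (m + 1) (Function.update (padRows E) i (Pi.single 0 1)) =
      (-1) ^ (i : ℕ) * (Matrix.of fun a => E (i.succAbove a)).det := by
  have h : Function.update (padRows E) i (Pi.single 0 1) =
      fun a => (Fin.cons (if a = i then (1 : ℝ) else 0) (if a = i then 0 else E a) :
        Fin (m + 1) → ℝ) := by
    ext a j
    by_cases ha : a = i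
    · subst ha
      refine Fin.cases ?_ (fun j => ?_) j <;> simp
    · simp [ha, padRows]
  rw [h, detC_apply, det_cons, Finset.sum_eq_single i]
  · simp
  · intro b _ hb; simp [hb]
  · simp

/-- Derivatives of order one contribute nothing to the divergence. -/
lemma sum_first_order (E : Fin (m + 1) → Fin m → ℝ) (l : (Fin m → ℝ) →L[ℝ] ℝ) :
    ∑ i, l (E i) * detC (m + 1) (Function.update (padRows E) i (Pi.single 0 1)) = 0 := by
  have h : (Matrix.of fun a => (Fin.cons (l (E a)) (E a) : Fin (m + 1) → ℝ)).det = 0 := by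
    rw [← Matrix.exists_mulVec_eq_zero_iff]
    refine ⟨Fin.cons 1 fun j => - l (Pi.single j 1), fun h => ?_, ?_⟩
    · have := congrFun h 0
      simp at this
    · ext a
      have hl : l (E a) = ∑ j, E a j * l (Pi.single j 1) := by
        conv_lhs => rw [pi_eq_sum_univ' (R := ℝ) (E a)]
        simp
      simp [Matrix.mulVec, dotProduct, Fin.sum_univ_succ, hl]
  rw [det_cons] at h
  rw [← h]
  refine Finset.sum_congr rfl fun i _ => ?_
  rw [detC_update]; ring

/-- Derivatives of order two cancel in pairs. -/
lemma sum_second_order (E : Fin (m + 1) → Fin m → ℝ)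
    (H : Fin (m + 1) → Fin (m + 1) → Fin m → ℝ) (hH : ∀ a b, H a b = H b a) :
    ∑ i, ∑ b, detC (m + 1) (Function.update (Function.update (padRows E) i (Pi.single 0 1)) b
      (if b = i then 0 else Fin.cons 0 (H b i))) = 0 := by
  set T : Fin (m + 1) → Fin (m + 1) → ℝ := fun i b =>
    detC (m + 1) (Function.update (Function.update (padRows E) i (Pi.single 0 1)) b
      (if b = i then 0 else Fin.cons 0 (H b i))) with hT
  have hanti : ∀ i b, T i b = - T b i := by
    intro i b
    by_cases h : b = i
    · subst h
      have : T b b = 0 := by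
        simp only [hT, if_true]
        exact Matrix.detRowAlternating.map_update_zero _ _
      rw [this, neg_zero]
    · simp only [hT, if_neg h, if_neg (Ne.symm h)]
      have := Matrix.detRowAlternating.map_swap (R := ℝ)
        (Function.update (Function.update (padRows E) i (Pi.single 0 1)) b (Fin.cons 0 (H b i)))
        (Ne.symm h)
      change Matrix.detRowAlternating _ = - (Matrix.detRowAlternating _)
      rw [← neg_eq_iff_eq_neg, ← this]
      congr 1
      ext a j
      rw [Function.comp_apply]
      by_cases hai : a = i
      · subst hai
        rw [Equiv.swap_apply_left, Function.update_self, Function.update_self, hH]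
      · by_cases hab : a = b
        · subst hab
          rw [Equiv.swap_apply_right, Function.update_of_ne (Ne.symm h), Function.update_self,
            Function.update_of_ne h, Function.update_self]
        · rw [Equiv.swap_apply_of_ne_of_ne hai hab, Function.update_of_ne hab,
            Function.update_of_ne hai, Function.update_of_ne hai, Function.update_of_ne hab]
  have h1 : ∑ i, ∑ b, T i b = - ∑ i, ∑ b, T i b := by
    conv_rhs => rw [Finset.sum_comm]
    rw [← Finset.sum_neg_distrib]
    refine Finset.sum_congr rfl fun i _ => ?_
    rw [← Finset.sum_neg_distrib]
    exact Finset.sum_congr rfl fun b _ => hanti i b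
  linarith

/-! ### Stokes' theorem and invariance of the degree integral -/

/-- The linear map `(s, v) ↦ (0, v)` in coordinates. -/
noncomputable def pad (m : ℕ) : V m →L[ℝ] (Fin (m + 1) → ℝ) :=
  ContinuousLinearMap.pi fun j => Fin.cases 0 (fun k =>
    (ContinuousLinearMap.proj k).comp (ContinuousLinearMap.snd ℝ ℝ (Fin m → ℝ))) j

lemma pad_apply (y : V m) : pad m y = Fin.cons 0 y.2 := by
  ext j
  refine Fin.cases ?_ (fun k => ?_) j <;> simp [pad]

/-- The components of the vector field whose flux is the pullback of `ρ dy₁ ∧ ⋯ ∧ dyₘ` by `F`. -/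
noncomputable def flux (F : (Fin (m + 1) → ℝ) → V m) (x : Fin (m + 1) → ℝ) (i : Fin (m + 1)) : ℝ :=
  rho (F x) * detC (m + 1) (Function.update
    (padRows fun a => (fderiv ℝ F x (Pi.single a 1)).2) i (Pi.single 0 1))

/-- The pullback of the form `ρ dy₁ ∧ ⋯ ∧ dyₘ` is closed as long as `F` stays away from the origin,
because `ρ` then depends locally on `(y₁, …, yₘ)` only. -/
lemma exists_flux_deriv {F : (Fin (m + 1) → ℝ) → V m} (hF : ContDiff ℝ 2 F)
    (x : Fin (m + 1) → ℝ) (hx : 3 / 4 ≤ ‖F x‖) :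
    ∃ W' : (Fin (m + 1) → ℝ) →L[ℝ] (Fin (m + 1) → ℝ), HasFDerivAt (flux F) W' x ∧
      ∑ i, W' (Pi.single i 1) i = 0 := by
  set A := fderiv ℝ F x with hA
  have hFd : HasFDerivAt F A x := (hF.differentiable (by norm_num) x).hasFDerivAt
  have hF1 : ContDiff ℝ 1 (fderiv ℝ F) := hF.fderiv_right (by norm_num)
  set B := fderiv ℝ (fderiv ℝ F) x with hB
  have hFd2 : HasFDerivAt (fderiv ℝ F) B x := (hF1.differentiable (by norm_num) x).hasFDerivAt
  have hsymm : ∀ v w, B v w = B w v := by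
    have : IsSymmSndFDerivAt ℝ F x := hF.contDiffAt.isSymmSndFDerivAt (by simp)
    exact fun v w => this v w
  have hr : HasFDerivAt (fun x => rho (F x)) ((fderiv ℝ rho (F x)).comp A) x :=
    ((rho_contDiff.differentiable (by norm_num) (F x)).hasFDerivAt).comp x hFd
  set E : Fin (m + 1) → Fin m → ℝ := fun a => (A (Pi.single a 1)).2 with hE
  -- the derivatives of the rows
  let R : Fin (m + 1) → Fin (m + 1) → ((Fin (m + 1) → ℝ) →L[ℝ] (Fin (m + 1) → ℝ)) := fun i a =>
    if a = i then 0 else (pad m).comp (B.flip (Pi.single a 1))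
  have hR : ∀ i, HasFDerivAt (fun x => Function.update
      (padRows fun a => (fderiv ℝ F x (Pi.single a 1)).2) i (Pi.single 0 1 : Fin (m + 1) → ℝ))
      (ContinuousLinearMap.pi (R i)) x := by
    intro i
    rw [hasFDerivAt_pi]
    intro a
    by_cases ha : a = i
    · subst ha
      simp only [Function.update_self, R, if_true]
      exact hasFDerivAt_const _ _
    · simp only [Function.update_of_ne ha, R, if_neg ha]
      have h1 : HasFDerivAt (fun x => fderiv ℝ F x (Pi.single a 1)) (B.flip (Pi.single a 1)) x := by
        have := hFd2.clm_apply (hasFDerivAt_const (Pi.single a 1 : Fin (m + 1) → ℝ) x)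
        rwa [ContinuousLinearMap.comp_zero, zero_add] at this
      have h2 := (pad m).hasFDerivAt.comp x h1
      refine h2.congr_of_eventuallyEq (Filter.Eventually.of_forall fun y => ?_)
      simp only [padRows, Function.comp_apply, pad_apply]
  have hW : ∀ i, HasFDerivAt (fun x => flux F x i)
      (rho (F x) • ((detC (m + 1)).linearDeriv (Function.update (padRows E) i (Pi.single 0 1))).comp
          (ContinuousLinearMap.pi (R i)) +
        detC (m + 1) (Function.update (padRows E) i (Pi.single 0 1)) •
          (fderiv ℝ rho (F x)).comp A) x := fun i =>
    hr.mul (((detC (m + 1)).hasFDerivAt _).comp x (hR i))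
  refine ⟨_, hasFDerivAt_pi.mpr hW, ?_⟩
  have hfirst : ∀ i, fderiv ℝ rho (F x) (A (Pi.single i 1)) =
      (fderiv ℝ rho (F x)).comp (ContinuousLinearMap.inr ℝ ℝ (Fin m → ℝ)) (E i) := by
    intro i
    have : A (Pi.single i 1) = (A (Pi.single i 1)).1 • ((1, 0) : V m) + (0, E i) := by
      ext <;> simp [hE]
    rw [this, map_add, map_smul, fderiv_rho_fst hx]
    simp
  have h1 := sum_first_order E
    ((fderiv ℝ rho (F x)).comp (ContinuousLinearMap.inr ℝ ℝ (Fin m → ℝ)))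
  have h2 := sum_second_order E (fun a b => (B (Pi.single a 1) (Pi.single b 1)).2)
    (fun a b => by rw [hsymm])
  have h3 : ∀ i, (ContinuousLinearMap.pi (R i)) (Pi.single i 1) = fun b => if b = i then 0 else
      (Fin.cons 0 (B (Pi.single b 1) (Pi.single i 1)).2 : Fin (m + 1) → ℝ) := by
    intro i
    ext1 b
    by_cases hb : b = i
    · simp [R, hb]
    · simp [R, hb, pad_apply, hsymm (Pi.single i 1)]
  simp only [ContinuousLinearMap.coe_pi', add_apply, smul_apply,
    ContinuousLinearMap.comp_apply, smul_eq_mul, Finset.sum_add_distrib, ← Finset.mul_sum,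
    ContinuousMultilinearMap.linearDeriv_apply]
  have h4 : ∀ i b, (R i b) (Pi.single i 1) = if b = i then 0 else
      (Fin.cons 0 (B (Pi.single b 1) (Pi.single i 1)).2 : Fin (m + 1) → ℝ) := fun i b =>
    congrFun (h3 i) b
  simp only [h4]
  rw [h2, mul_zero, zero_add, ← h1]
  refine Finset.sum_congr rfl fun i _ => ?_
  rw [mul_comm, hfirst]

/-- On the faces `x 0 = t` the normal component of `flux F` is the integrand of the degree. -/
lemma flux_zero (F : (Fin (m + 1) → ℝ) → V m) (hF : ContDiff ℝ 2 F) (t : ℝ) (x : Fin m → ℝ) :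
    flux F (Fin.cons t x) 0 = jac (fun y => F (Fin.cons t y)) x := by
  rw [flux, detC_update, jac]
  have hd : HasFDerivAt F (fderiv ℝ F (Fin.cons t x)) (Fin.cons t x) :=
    (hF.differentiable (by norm_num) _).hasFDerivAt
  let L : (Fin m → ℝ) →L[ℝ] (Fin (m + 1) → ℝ) := ContinuousLinearMap.pi fun j =>
    Fin.cases 0 (fun k => ContinuousLinearMap.proj k) j
  have hL : HasFDerivAt (fun y : Fin m → ℝ => (Fin.cons t y : Fin (m + 1) → ℝ)) L x := by
    rw [hasFDerivAt_pi']
    intro j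
    refine Fin.cases ?_ (fun k => ?_) j
    · simp only [Fin.cons_zero]; exact hasFDerivAt_const t x
    · simp only [Fin.cons_succ]; exact hasFDerivAt_apply k x
  have h := (hd.comp x hL).fderiv
  have hLa : ∀ a : Fin m, L (Pi.single a 1) = Pi.single a.succ 1 := by
    intro a
    ext j
    refine Fin.cases ?_ (fun k => ?_) j
    · simp [L]
    · simp [L, Pi.single_apply]
  change _ = rho (F (Fin.cons t x)) * (Matrix.of fun a =>
    (fderiv ℝ (F ∘ fun y => Fin.cons t y) x (Pi.single a 1)).2).det
  rw [h]
  simp [hLa]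

/-- The divergence theorem on `[0, 1] × [0, 1]ᵐ`: the divergence of `flux F` vanishes, and so does
`flux F` on the faces other than those in the first direction. -/
lemma degI_eq_of_homotopy {F : (Fin (m + 1) → ℝ) → V m} (hF : ContDiff ℝ 2 F)
    (hn : ∀ x ∈ Icc (0 : Fin (m + 1) → ℝ) 1, 3 / 4 ≤ ‖F x‖)
    (hb : ∀ x ∈ Icc (0 : Fin (m + 1) → ℝ) 1, ∀ i : Fin m, (x i.succ = 0 ∨ x i.succ = 1) →
      1 / 4 ≤ (F x).1) :
    degI (fun x => F (Fin.cons 0 x)) = degI (fun x => F (Fin.cons 1 x)) := by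
  classical
  let W' : (Fin (m + 1) → ℝ) → ((Fin (m + 1) → ℝ) →L[ℝ] (Fin (m + 1) → ℝ)) := fun x =>
    if hx : 3 / 4 ≤ ‖F x‖ then (exists_flux_deriv hF x hx).choose else 0
  have hW' : ∀ x ∈ Icc (0 : Fin (m + 1) → ℝ) 1, HasFDerivAt (flux F) (W' x) x ∧
      ∑ i, W' x (Pi.single i 1) i = 0 := by
    intro x hx
    simp only [W', dif_pos (hn x hx)]
    exact (exists_flux_deriv hF x (hn x hx)).choose_spec
  have hdiv := MeasureTheory.integral_divergence_of_hasFDerivAt_off_countable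
    (0 : Fin (m + 1) → ℝ) 1 zero_le_one (flux F) W' ∅ countable_empty
    (fun x hx => (hW' x hx).1.continuousAt.continuousWithinAt)
    (fun x hx => (hW' x ⟨fun i => (hx.1 i (mem_univ i)).1.le,
      fun i => (hx.1 i (mem_univ i)).2.le⟩).1)
    ((MeasureTheory.integrableOn_zero (ε' := ℝ)).congr_fun (fun x hx => (hW' x hx).2.symm)
      measurableSet_Icc)
  rw [MeasureTheory.setIntegral_congr_fun measurableSet_Icc (fun x hx => (hW' x hx).2),
    MeasureTheory.integral_zero, Fin.sum_univ_succ] at hdiv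
  have hmem : ∀ (j : Fin (m + 1)) (c : ℝ), 0 ≤ c → c ≤ 1 →
      ∀ x ∈ Icc ((0 : Fin (m + 1) → ℝ) ∘ j.succAbove) ((1 : Fin (m + 1) → ℝ) ∘ j.succAbove),
      j.insertNth c x ∈ Icc (0 : Fin (m + 1) → ℝ) 1 := by
    intro j c h0 h1 x hx
    rw [Fin.insertNth_mem_Icc]
    exact ⟨⟨h0, h1⟩, hx⟩
  have hside : ∀ (j : Fin m) (c : ℝ), c = 0 ∨ c = 1 →
      ∫ x in Icc ((0 : Fin (m + 1) → ℝ) ∘ j.succ.succAbove)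
        ((1 : Fin (m + 1) → ℝ) ∘ j.succ.succAbove), flux F (j.succ.insertNth c x) j.succ = 0 := by
    intro j c hc
    refine MeasureTheory.setIntegral_eq_zero_of_forall_eq_zero fun x hx => ?_
    have h1 := hb _ (hmem j.succ c (by rcases hc with h | h <;> simp [h])
      (by rcases hc with h | h <;> simp [h]) x hx) j (by simpa using hc)
    rw [flux, rho_eq_zero h1, zero_mul]
  have hz : ∑ j : Fin m, ((∫ x in Icc ((0 : Fin (m + 1) → ℝ) ∘ j.succ.succAbove)
        ((1 : Fin (m + 1) → ℝ) ∘ j.succ.succAbove),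
          flux F (j.succ.insertNth ((1 : Fin (m + 1) → ℝ) j.succ) x) j.succ) -
        ∫ x in Icc ((0 : Fin (m + 1) → ℝ) ∘ j.succ.succAbove)
        ((1 : Fin (m + 1) → ℝ) ∘ j.succ.succAbove),
          flux F (j.succ.insertNth ((0 : Fin (m + 1) → ℝ) j.succ) x) j.succ) = 0 := by
    refine Finset.sum_eq_zero fun j _ => ?_
    rw [hside j ((1 : Fin (m + 1) → ℝ) j.succ) (Or.inr rfl),
      hside j ((0 : Fin (m + 1) → ℝ) j.succ) (Or.inl rfl), sub_zero]
  rw [hz, add_zero, eq_comm, sub_eq_zero] at hdiv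
  have hface : ∀ c : ℝ, ∫ x in Icc ((0 : Fin (m + 1) → ℝ) ∘ (0 : Fin (m + 1)).succAbove)
        ((1 : Fin (m + 1) → ℝ) ∘ (0 : Fin (m + 1)).succAbove),
          flux F ((0 : Fin (m + 1)).insertNth c x) 0 = degI fun x => F (Fin.cons c x) := by
    intro c
    unfold degI
    refine MeasureTheory.setIntegral_congr_fun measurableSet_Icc fun x _ => ?_
    rw [← flux_zero F hF, Fin.insertNth_zero]
    rfl
  rw [← hface, ← hface]
  exact hdiv.symm

/-! ### The degree of a generalized loop -/

/-- The radial retraction of the punctured space onto the complement of the open unit ball. -/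
noncomputable def nrm (y : X m) : X m :=
  ⟨(min ‖(y : V m)‖ 1)⁻¹ • (y : V m),
    smul_ne_zero (inv_ne_zero (lt_min (norm_pos_iff.mpr y.2) one_pos).ne') y.2⟩

@[fun_prop]
lemma continuous_nrm : Continuous (nrm (m := m)) := by
  have h : Continuous fun y : X m => (min ‖(y : V m)‖ 1)⁻¹ :=
    Continuous.inv₀ (by fun_prop) fun y => (lt_min (norm_pos_iff.mpr y.2) one_pos).ne'
  exact Continuous.subtype_mk (h.smul continuous_subtype_val) _

lemma nrm_eq_self {y : X m} (h : 1 ≤ ‖(y : V m)‖) : nrm y = y := by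
  apply Subtype.ext
  simp [nrm, min_eq_right h]

lemma nrm_base : nrm (base m) = base m := nrm_eq_self (by simp [base, Prod.norm_def])

lemma one_le_norm_nrm (y : X m) : 1 ≤ ‖(nrm y : V m)‖ := by
  by_cases h : 1 ≤ ‖(y : V m)‖
  · rwa [nrm_eq_self h]
  · have h0 : ‖(y : V m)‖ ≠ 0 := norm_ne_zero_iff.mpr y.2
    simp only [nrm, min_eq_left (le_of_not_ge h), norm_smul, norm_inv, norm_norm]
    rw [inv_mul_cancel₀ h0]

/-- The `C²` maps uniformly close to the radial retraction of `f`. -/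
def Adm (p : (Fin m → ℝ) → V m) (f : (Fin m → I) → X m) : Prop :=
  ContDiff ℝ 2 p ∧ ∀ z, ‖p (toR z) - (nrm (f z) : V m)‖ ≤ 1 / 4

lemma exists_adm {f : (Fin m → I) → X m} (hf : Continuous f) : ∃ p, Adm p f := by
  obtain ⟨p, h1, h2⟩ := exists_smooth_approx (f := fun z => (nrm (f z) : V m))
    (continuous_subtype_val.comp (continuous_nrm.comp hf)) (by norm_num : (0 : ℝ) < 1 / 4)
  exact ⟨p, h1, fun z => (h2 z).le⟩

/-- Two approximations of the same loop are joined by a straight line of approximations. -/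
lemma Adm.degI_eq {p q : (Fin m → ℝ) → V m} {f : (Fin m → I) → X m} (hp : Adm p f)
    (hq : Adm q f) (hf : ∀ z ∈ Cube.boundary (Fin m), f z = base m) : degI p = degI q := by
  let F : (Fin (m + 1) → ℝ) → V m := fun w =>
    (1 - w 0) • p (fun i => w i.succ) + w 0 • q (fun i => w i.succ)
  have hF : ContDiff ℝ 2 F := by
    have h1 := hp.1
    have h2 := hq.1
    simp only [F]; fun_prop
  have hmem : ∀ w ∈ Icc (0 : Fin (m + 1) → ℝ) 1,
      (fun i : Fin m => w i.succ) ∈ Icc (0 : Fin m → ℝ) 1 := fun w hw =>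
    ⟨fun i => hw.1 i.succ, fun i => hw.2 i.succ⟩
  have hclose : ∀ w (hw : w ∈ Icc (0 : Fin (m + 1) → ℝ) 1),
      ‖F w - (nrm (f (ofR _ (hmem w hw))) : V m)‖ ≤ 1 / 4 := by
    intro w hw
    have h1 := hp.2 (ofR _ (hmem w hw))
    have h2 := hq.2 (ofR _ (hmem w hw))
    rw [toR_ofR] at h1 h2
    have hw0 : 0 ≤ w 0 := hw.1 0
    have hw1 : w 0 ≤ 1 := hw.2 0
    generalize (nrm (f (ofR _ (hmem w hw))) : V m) = y at h1 h2
    have : F w - y = (1 - w 0) • (p (fun i => w i.succ) - y) +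
        w 0 • (q (fun i => w i.succ) - y) := by
      simp only [F]; module
    rw [this]
    refine (norm_add_le _ _).trans ?_
    rw [norm_smul, norm_smul, Real.norm_of_nonneg hw0, Real.norm_of_nonneg (by linarith)]
    nlinarith
  have key := degI_eq_of_homotopy hF (fun w hw => ?_) (fun w hw i hi => ?_)
  · simpa [F] using key
  · have h1 := hclose w hw
    have h2 := one_le_norm_nrm (f (ofR _ (hmem w hw)))
    have h3 := norm_sub_norm_le (nrm (f (ofR _ (hmem w hw))) : V m) (F w)
    rw [norm_sub_rev] at h3
    linarith
  · have h1 := hclose w hw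
    rw [hf _ ⟨i, hi.imp (fun h => Subtype.ext h) (fun h => Subtype.ext h)⟩, nrm_base] at h1
    have h2 := (norm_fst_le _).trans h1
    rw [Prod.fst_sub, Real.norm_eq_abs] at h2
    have h3 := (abs_le.mp h2).1
    change -(1 / 4) ≤ (F w).1 - 1 at h3
    linarith

/-- The degree of a generalized loop in the punctured space, up to a positive factor. -/
noncomputable def deg (f : Ω^ (Fin m) (X m) (base m)) : ℝ :=
  degI (exists_adm f.1.continuous).choose

lemma Adm.deg_eq {p : (Fin m → ℝ) → V m} {f : Ω^ (Fin m) (X m) (base m)} (hp : Adm p f) :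
    deg f = degI p :=
  (exists_adm f.1.continuous).choose_spec.degI_eq hp (GenLoop.boundary f)

/-- One smooth map approximates all nearby stages of a homotopy, so the degree is locally constant
along it. -/
lemma deg_eq_of_homotopic {f g : Ω^ (Fin m) (X m) (base m)} (h : GenLoop.Homotopic f g) :
    deg f = deg g := by
  obtain ⟨H⟩ := h
  let G : I → Ω^ (Fin m) (X m) (base m) := fun t => ⟨⟨fun z => H (t, z), by fun_prop⟩,
    fun z hz => (H.eq_fst t hz).trans (GenLoop.boundary f z hz)⟩
  have hGc : Continuous fun q : I × (Fin m → I) => (nrm (H q) : V m) :=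
    continuous_subtype_val.comp (continuous_nrm.comp H.continuous)
  have hG : IsLocallyConstant fun t => deg (G t) := by
    rw [IsLocallyConstant.iff_eventually_eq]
    intro t₀
    obtain ⟨p, hp, hpt⟩ := exists_smooth_approx (f := fun z => (nrm (G t₀ z) : V m))
      (continuous_subtype_val.comp (continuous_nrm.comp (G t₀).1.continuous))
      (by norm_num : (0 : ℝ) < 1 / 8)
    obtain ⟨δ, hδ, hu⟩ := Metric.uniformContinuous_iff.mp
      (CompactSpace.uniformContinuous_of_continuous hGc) (1 / 8) (by norm_num)
    filter_upwards [Metric.ball_mem_nhds t₀ hδ] with t ht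
    have h1 : Adm p (G t₀) := ⟨hp, fun z => (hpt z).le.trans (by norm_num)⟩
    have h2 : Adm p (G t) := ⟨hp, fun z => by
      have h3 : dist (nrm (H (t₀, z)) : V m) (nrm (H (t, z)) : V m) < 1 / 8 := hu (by
        rw [Prod.dist_eq, dist_self, max_eq_left dist_nonneg, dist_comm]; exact ht)
      have h4 := hpt z
      rw [← dist_eq_norm] at h4 ⊢
      have := dist_triangle (p (toR z)) (nrm (G t₀ z) : V m) (nrm (G t z) : V m)
      change dist (nrm (G t₀ z) : V m) (nrm (G t z) : V m) < 1 / 8 at h3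
      linarith⟩
    rw [h1.deg_eq, h2.deg_eq]
  have h0 : G 0 = f := by
    ext1 z; exact H.map_zero_left z
  have h1 : G 1 = g := by
    ext1 z; exact H.map_one_left z
  rw [← h0, ← h1]
  exact hG.apply_eq_of_preconnectedSpace 0 1

/-! ### Additivity -/

lemma jac_continuous {p : (Fin m → ℝ) → V m} (hp : ContDiff ℝ 2 p) : Continuous (jac p) := by
  have h1 : Continuous (fderiv ℝ p) := hp.continuous_fderiv (by norm_num)
  have h2 := rho_contDiff.continuous.comp hp.continuous
  unfold jac
  refine h2.mul (Continuous.matrix_det ?_)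
  refine continuous_matrix fun a b => ?_
  simp only [Matrix.of_apply]
  fun_prop

lemma jac_aff {p : (Fin m → ℝ) → V m} (hp : ContDiff ℝ 2 p) (i : Fin m) (a d : ℝ)
    (x : Fin m → ℝ) : jac (fun x => p (aff i a d x)) x = d * jac p (aff i a d x) := by
  have h1 : HasFDerivAt p (fderiv ℝ p (aff i a d x)) (aff i a d x) :=
    (hp.differentiable (by norm_num) _).hasFDerivAt
  have h2 := (h1.comp x (aff_hasFDerivAt i a d x)).fderiv
  have h3 : ∀ b : Fin m, affD i d (Pi.single b 1) = (if b = i then d else 1) • Pi.single b 1 := by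
    intro b
    ext j
    by_cases hj : j = b
    · subst hj
      by_cases h : j = i <;> simp [affD, h]
    · by_cases h : j = i
      · subst h; simp [affD, hj]
      · simp [affD, hj, h]
  unfold jac
  change _ * (Matrix.of fun b => (fderiv ℝ (p ∘ aff i a d) x (Pi.single b 1)).2).det = _
  rw [h2]
  have h4 : (Matrix.of fun b => (((fderiv ℝ p (aff i a d x)).comp (affD i d)) (Pi.single b 1)).2)
      = Matrix.of fun b c => (if b = i then d else 1) *
        (Matrix.of fun b => (fderiv ℝ p (aff i a d x) (Pi.single b 1)).2) b c := by
    ext b c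
    rw [Matrix.of_apply, ContinuousLinearMap.comp_apply, h3, map_smul]
    by_cases h : b = i <;> simp [h]
  rw [h4, Matrix.det_mul_column]
  simp; ring

lemma degI_aff {p : (Fin m → ℝ) → V m} (hp : ContDiff ℝ 2 p) (i : Fin m) (a : ℝ) {d : ℝ}
    (hd : 0 < d) : degI (fun x => p (aff i a d x)) =
      ∫ x in aff i a d '' Icc (0 : Fin m → ℝ) 1, jac p x := by
  rw [MeasureTheory.integral_image_eq_integral_abs_det_fderiv_smul MeasureTheory.volume
    measurableSet_Icc (fun x _ => (aff_hasFDerivAt i a d x).hasFDerivWithinAt)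
    (aff_injective i a hd.ne').injOn]
  simp only [degI, jac_aff hp, affD_det, abs_of_pos hd, smul_eq_mul]

lemma aff_image (i : Fin m) {a d : ℝ} (ha : 0 ≤ a) (hd : 0 < d) (had : a + d ≤ 1) :
    aff i a d '' Icc (0 : Fin m → ℝ) 1 =
      Icc (0 : Fin m → ℝ) 1 ∩ {x | a ≤ x i ∧ x i ≤ a + d} := by
  ext y
  constructor
  · rintro ⟨x, hx, rfl⟩
    refine ⟨aff_mem ha hd had hx, ?_⟩
    have h1 : 0 ≤ x i := hx.1 i
    have h2 : x i ≤ 1 := hx.2 i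
    simp only [mem_ofPred_eq, aff_self]
    constructor <;> nlinarith
  · rintro ⟨hy, hy1, hy2⟩
    refine ⟨fun j => if j = i then (y i - a) / d else y j, ?_, ?_⟩
    · constructor
      · intro j
        by_cases h : j = i
        · simp only [h, if_true, Pi.zero_apply]
          exact div_nonneg (by linarith) hd.le
        · simpa [h] using hy.1 j
      · intro j
        by_cases h : j = i
        · simp only [h, if_true, Pi.one_apply]
          rw [div_le_one hd]; linarith
        · simpa [h] using hy.2 j
    · ext j
      by_cases h : j = i
      · subst h
        rw [aff_self]; simp only [if_true]; field_simp; ring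
      · rw [aff_of_ne h]; simp [h]

lemma degI_split {p : (Fin m → ℝ) → V m} (hp : ContDiff ℝ 2 p) (i : Fin m) :
    degI p = degI (fun x => p (aff i 0 (1 / 2) x)) + degI (fun x => p (aff i (1 / 2) (1 / 2) x)) := by
  rw [degI_aff hp i 0 (by norm_num), degI_aff hp i (1 / 2) (by norm_num),
    aff_image i le_rfl (by norm_num) (by norm_num),
    aff_image i (by norm_num) (by norm_num) (by norm_num)]
  have hjac : MeasureTheory.IntegrableOn (jac p) (Icc (0 : Fin m → ℝ) 1) :=
    (jac_continuous hp).continuousOn.integrableOn_compact isCompact_Icc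
  have hmeas : MeasurableSet {x : Fin m → ℝ | (1 : ℝ) / 2 ≤ x i ∧ x i ≤ 1 / 2 + 1 / 2} :=
    ((isClosed_le continuous_const (continuous_apply i)).inter
      (isClosed_le (continuous_apply i) continuous_const)).measurableSet
  rw [← MeasureTheory.setIntegral_union₀ ?_ (measurableSet_Icc.inter hmeas).nullMeasurableSet
    (hjac.mono_set inter_subset_left) (hjac.mono_set inter_subset_left)]
  · unfold degI
    congr 2
    ext x
    constructor
    · intro hx
      rcases le_total (x i) (1 / 2) with h | h
      · exact Or.inl ⟨hx, hx.1 i, by linarith⟩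
      · have : x i ≤ 1 := hx.2 i
        exact Or.inr ⟨hx, h, by linarith⟩
    · rintro (h | h) <;> exact h.1
  · have h0 : MeasureTheory.volume {x : Fin m → ℝ | x i = 1 / 2} = 0 := by
      rw [MeasureTheory.volume_pi]
      exact MeasureTheory.Measure.pi_hyperplane _ i _
    refine MeasureTheory.measure_mono_null ?_ h0
    rintro x ⟨⟨-, -, h1⟩, -, h2, -⟩
    exact le_antisymm (by linarith) h2

/-- Restricting an approximation of the concatenation to the two halves of the cube gives
approximations of the factors. -/
lemma deg_transAt (i : Fin m) (f g : Ω^ (Fin m) (X m) (base m)) :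
    deg (GenLoop.transAt i f g) = deg f + deg g := by
  obtain ⟨p, hp⟩ := exists_adm (GenLoop.transAt i f g).1.continuous
  let c : I := ⟨1 / 2, by norm_num, by norm_num⟩
  have hf : Adm (fun x => p (aff i 0 (1 / 2) x)) f := by
    refine ⟨hp.1.comp (aff_contDiff _ _ _), fun z => ?_⟩
    have h1 := hp.2 (leftMap i c z)
    change ‖p (toR (leftMap i c z)) - (nrm (GenLoop.transAt i f g (leftMap i c z)) : V m)‖ ≤ _ at h1
    rw [toR_leftMap, transAt_apply] at h1
    have h2 : ((leftMap i c z i : I) : ℝ) = 1 / 2 * z i := by simp [leftMap, c]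
    have h3 := (z i).2.2
    rw [if_pos (by rw [h2]; linarith), h2] at h1
    have h4 : Function.update (leftMap i c z) i
        (projIcc (0 : ℝ) 1 zero_le_one (2 * (1 / 2 * (z i : ℝ)))) = z := by
      rw [← mul_assoc, show (2 : ℝ) * (1 / 2) = 1 by norm_num, one_mul, projIcc_val]
      simp [leftMap]
    rwa [h4] at h1
  have hg : Adm (fun x => p (aff i (1 / 2) (1 / 2) x)) g := by
    refine ⟨hp.1.comp (aff_contDiff _ _ _), fun z => ?_⟩
    have h1 := hp.2 (rightMap i c z)
    change ‖p (toR (rightMap i c z)) - (nrm (GenLoop.transAt i f g (rightMap i c z)) : V m)‖ ≤ _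
      at h1
    rw [toR_rightMap] at h1
    have hc : (c : ℝ) = 1 / 2 := rfl
    rw [hc, show (1 : ℝ) - 1 / 2 = 1 / 2 by norm_num] at h1
    have h5 : GenLoop.transAt i f g (rightMap i c z) = g z := by
      rw [transAt_apply]
      have h2 : ((rightMap i c z i : I) : ℝ) = 1 / 2 + 1 / 2 * z i := by
        simp [rightMap, hc, unitInterval.coe_symm_eq]; ring
      split_ifs with h
      · have h3 := (z i).2.1
        rw [h2] at h
        have h0 : z i = 0 := Subtype.ext (by change (z i : ℝ) = 0; linarith)
        rw [GenLoop.boundary g z ⟨i, Or.inl h0⟩]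
        refine GenLoop.boundary f _ ⟨i, Or.inr ?_⟩
        rw [Function.update_self, h2, h0]
        simp
      · congr 1
        rw [h2, show (2 : ℝ) * (1 / 2 + 1 / 2 * z i) - 1 = z i by ring, projIcc_val]
        simp [rightMap]
    rwa [h5] at h1
  rw [hp.deg_eq, hf.deg_eq, hg.deg_eq, degI_split hp.1 i]

/-! ### The generator has nonzero degree -/

/-- The smooth extension of `gen m` to `ℝᵐ`. -/
noncomputable def genMap (x : Fin m → ℝ) : V m := wrap fun i => 2 * x i - 1

lemma genMap_contDiff : ContDiff ℝ 2 (genMap (m := m)) := by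
  have := wrap_contDiff (m := m)
  unfold genMap; fun_prop

lemma genMap_adm : Adm (genMap (m := m)) (gen m) := by
  refine ⟨genMap_contDiff, fun z => ?_⟩
  have h : (gen m z : V m) = genMap (toR z) := by
    change wrap (fun i => 1 * center z i) = wrap _
    congr 1
    ext i
    simp [center, toR]
  rw [nrm_eq_self (by rw [h]; exact one_le_norm_wrap _), h, sub_self, norm_zero]
  norm_num

/-- Wherever `ρ` does not vanish on the image, the second component of `genMap` is `3 (2 x - 1)`. -/
lemma jac_genMap (x : Fin m → ℝ) : jac genMap x = rho (genMap x) * 6 ^ m := by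
  unfold jac
  by_cases h : rho (genMap x) = 0
  · simp [h]
  congr 1
  set v : (Fin m → ℝ) → (Fin m → ℝ) := fun x i => 2 * x i - 1 with hv
  have hvc : Continuous v := by simp only [hv]; fun_prop
  have h1 : ‖v x‖ < 2 / 3 := by
    by_contra hn
    refine h (rho_eq_zero ?_)
    simp only [genMap, wrap]
    rw [bumpA_eq_zero (not_lt.mp hn)]; norm_num
  have h2 : (fun x => (genMap x).2) =ᶠ[𝓝 x] fun x => (3 : ℝ) • v x := by
    have : ∀ᶠ y in 𝓝 x, ‖v y‖ < 2 / 3 := hvc.norm.continuousAt.eventually_lt_const h1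
    filter_upwards [this] with y hy
    simp only [genMap, wrap]
    rw [bumpB_eq_one hy.le, mul_one]
  have hd : HasFDerivAt genMap (fderiv ℝ genMap x) x :=
    (genMap_contDiff.differentiable (by norm_num) x).hasFDerivAt
  have h3 : HasFDerivAt (fun x => (3 : ℝ) • v x)
      ((6 : ℝ) • ContinuousLinearMap.id ℝ (Fin m → ℝ)) x := by
    have : (fun x => (3 : ℝ) • v x) = fun x => (6 : ℝ) • x - fun _ => (3 : ℝ) := by
      ext y i; simp [hv]; ring
    rw [this]
    exact ((hasFDerivAt_id x).const_smul (6 : ℝ)).sub_const _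
  have h4 := hd.snd.unique (h3.congr_of_eventuallyEq h2)
  have h5 : (Matrix.of fun a => (fderiv ℝ genMap x (Pi.single a 1)).2) =
      (6 : ℝ) • (1 : Matrix (Fin m) (Fin m) ℝ) := by
    ext a b
    have := congrFun (DFunLike.congr_fun h4 (Pi.single a 1)) b
    simp only [ContinuousLinearMap.comp_apply, ContinuousLinearMap.coe_snd'] at this
    rw [Matrix.of_apply, this]
    simp [Matrix.one_apply, Pi.single_apply, eq_comm]
  rw [h5, Matrix.det_smul]; simp

lemma deg_gen_pos : 0 < deg (gen m) := by
  rw [genMap_adm.deg_eq, degI, MeasureTheory.setIntegral_pos_iff_support_of_nonneg_ae]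
  · refine lt_of_lt_of_le
      (Metric.measure_ball_pos MeasureTheory.volume (fun _ : Fin m => (1 / 2 : ℝ))
        (by norm_num : (0 : ℝ) < 1 / 24)) (MeasureTheory.measure_mono fun x hx => ?_)
    rw [mem_ball_iff_norm] at hx
    have hx' : ∀ i, |x i - 1 / 2| < 1 / 24 := fun i => (norm_le_pi_norm _ i).trans_lt hx
    refine ⟨?_, fun i => ?_, fun i => ?_⟩
    · have hv : ‖fun i => 2 * x i - 1‖ ≤ 1 / 12 := by
        have : (fun i => 2 * x i - 1) = (2 : ℝ) • (x - fun _ => (1 / 2 : ℝ)) := by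
          ext i; simp; ring
        rw [this, norm_smul]; norm_num
        norm_num at hx
        linarith
      have h1 : rho (genMap x) = 1 := by
        simp only [rho, genMap, wrap]
        rw [bumpA_eq_one (by linarith), bumpB_eq_one (by linarith),
          Real.smoothTransition.one_of_one_le (by norm_num), mul_one]
        refine (bumpC m).one_of_mem_closedBall (mem_closedBall_zero_iff.mpr ?_)
        rw [norm_smul]
        change _ ≤ (1 / 4 : ℝ)
        norm_num
        linarith
      rw [Function.mem_support, jac_genMap, h1]
      positivity
    · have := (abs_lt.mp (hx' i)).1
      simp only [Pi.zero_apply]; linarith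
    · have := (abs_lt.mp (hx' i)).2
      simp only [Pi.one_apply]; linarith
  · refine Filter.Eventually.of_forall fun x => ?_
    rw [jac_genMap]
    exact mul_nonneg (rho_nonneg _) (by positivity)
  · exact (jac_continuous genMap_contDiff).continuousOn.integrableOn_compact isCompact_Icc

/-! ### The homotopy group of the punctured space -/

/-- Two loops in the punctured space whose values differ by positive factors are homotopic. -/
lemma homotopic_of_smul {f g : Ω^ (Fin m) (X m) (base m)} (c : (Fin m → I) → ℝ)
    (hc : ∀ z, 0 < c z) (h : ∀ z, (g z : V m) = c z • (f z : V m)) : GenLoop.Homotopic f g := by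
  have hne : ∀ (t : I) (z : Fin m → I),
      (1 - (t : ℝ)) • (f z : V m) + (t : ℝ) • (g z : V m) ≠ 0 := by
    intro t z
    rw [h, smul_smul, ← add_smul]
    refine smul_ne_zero (ne_of_gt ?_) (f z).2
    have h0 := t.2.1
    have h1 := t.2.2
    have h2 := hc z
    rcases h0.eq_or_lt with h3 | h3
    · rw [← h3]; norm_num
    · have := mul_pos h3 h2
      linarith
  refine homotopic_of _ _ (fun t z => ⟨_, hne t z⟩) ?_ ?_ ?_ ?_
  · have hf : Continuous fun z => (f z : V m) := continuous_subtype_val.comp f.1.continuous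
    have hg : Continuous fun z => (g z : V m) := continuous_subtype_val.comp g.1.continuous
    refine Continuous.subtype_mk ?_ _
    have hf' := hf.comp (continuous_snd (X := I))
    have hg' := hg.comp (continuous_snd (X := I))
    have ht : Continuous fun p : I × (Fin m → I) => (p.1 : ℝ) :=
      continuous_subtype_val.comp continuous_fst
    exact ((continuous_const.sub ht).smul hf').add (ht.smul hg')
  · intro z; apply Subtype.ext; simp
  · intro z; apply Subtype.ext; simp
  · intro t z hz
    apply Subtype.ext
    simp only [GenLoop.boundary f z hz, GenLoop.boundary g z hz]
    rw [← add_smul]; simp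

lemma mem_zpowers [Nonempty (Fin m)] (a : HomotopyGroup (Fin m) (X m) (base m)) :
    a ∈ Subgroup.zpowers (cls (gen m)) := by
  obtain ⟨f, rfl⟩ := cls_surj a
  have h : GenLoop.Homotopic f (mapLoop ⟨nrm, continuous_nrm⟩ nrm_base f) :=
    homotopic_of_smul (fun z => (min ‖(f z : V m)‖ 1)⁻¹)
      (fun z => inv_pos.mpr (lt_min (norm_pos_iff.mpr (f z).2) one_pos)) fun z => rfl
  rw [cls_eq h]
  exact mem_zpowers_of_one_le _ fun z => one_le_norm_nrm (f z)

/-- The degree as a homomorphism to the additive group of real numbers. -/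
noncomputable def degHom [Nonempty (Fin m)] :
    HomotopyGroup (Fin m) (X m) (base m) →* Multiplicative ℝ :=
  MonoidHom.mk' (Quotient.lift (fun f => Multiplicative.ofAdd (deg f))
    fun _ _ h => congrArg Multiplicative.ofAdd (deg_eq_of_homotopic h)) (by
    rintro ⟨f⟩ ⟨g⟩
    have i : Fin m := Classical.arbitrary _
    change Quotient.lift _ _ (cls f * cls g) =
      Multiplicative.ofAdd (deg f) * Multiplicative.ofAdd (deg g)
    rw [cls_mul i]
    change Multiplicative.ofAdd (deg (GenLoop.transAt i g f)) = _
    rw [deg_transAt, add_comm, ofAdd_add])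

/-- The homotopy group of the punctured space is infinite cyclic: the class of `gen`
generates it, and has infinite order since its degree is not zero. -/
theorem nonempty_mulEquiv_int [Nonempty (Fin m)] :
    Nonempty (HomotopyGroup (Fin m) (X m) (base m) ≃* Multiplicative ℤ) := by
  refine ⟨(MulEquiv.ofBijective (zpowersHom _ (cls (gen m))) ⟨?_, ?_⟩).symm⟩
  · rw [injective_iff_map_eq_one]
    intro k hk
    have h1 : degHom (cls (gen m)) = Multiplicative.ofAdd (deg (gen m)) := rfl
    have h2 := congrArg (degHom (m := m)) hk
    rw [zpowersHom_apply, map_zpow, map_one, h1, ← ofAdd_zsmul, ofAdd_eq_one, zsmul_eq_mul,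
      mul_eq_zero] at h2
    have h3 := h2.resolve_right deg_gen_pos.ne'
    exact Multiplicative.toAdd.injective (by exact_mod_cast h3)
  · intro a
    obtain ⟨k, hk⟩ := Subgroup.mem_zpowers_iff.mp (mem_zpowers a)
    exact ⟨Multiplicative.ofAdd k, by rw [zpowersHom_apply]; exact hk⟩

/-! ### Transport to the sphere -/

/-- The unit sphere in `ℝⁿ⁺²` has the homotopy groups of the punctured space: a linear
isomorphism taking `b` to the base point embeds it in the punctured space, and the radial
projection is inverse to this embedding up to a homotopy fixing the base point. -/
theorem nonempty_mulEquiv_sphere (n : ℕ)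
    (b : Metric.sphere (0 : EuclideanSpace ℝ (Fin (n + 2))) 1) :
    Nonempty (HomotopyGroup (Fin (n + 1)) (Metric.sphere (0 : EuclideanSpace ℝ (Fin (n + 2))) 1) b
      ≃* HomotopyGroup (Fin (n + 1)) (X (n + 1)) (base (n + 1))) := by
  let E := EuclideanSpace ℝ (Fin (n + 2))
  have hb : (b : E) ≠ 0 := ne_zero_of_mem_unit_sphere b
  have hfin : Module.finrank ℝ E = Module.finrank ℝ (V (n + 1)) := by
    simp [E]; omega
  let T₀ : E ≃L[ℝ] V (n + 1) := ContinuousLinearEquiv.ofFinrankEq hfin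
  obtain ⟨A, hA⟩ := SeparatingDual.exists_continuousLinearEquiv_apply_eq (R := ℝ)
    (x := T₀ b) (y := (base (n + 1) : V (n + 1))) (by simpa using hb) (base (n + 1)).2
  let T : E ≃L[ℝ] V (n + 1) := T₀.trans A
  have hTb : T b = (base (n + 1) : V (n + 1)) := hA
  have hTn : ∀ y : X (n + 1), T.symm (y : V (n + 1)) ≠ 0 := fun y => by simpa using y.2
  have hT0 : ∀ s : Metric.sphere (0 : E) 1, T (s : E) ≠ 0 := fun s => by
    simpa using ne_zero_of_mem_unit_sphere s
  let ι : C(Metric.sphere (0 : E) 1, X (n + 1)) :=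
    ⟨fun s => ⟨T s, hT0 s⟩,
      Continuous.subtype_mk (T.continuous.comp continuous_subtype_val) hT0⟩
  have hTc : Continuous fun y : X (n + 1) => T.symm (y : V (n + 1)) :=
    T.symm.continuous.comp continuous_subtype_val
  have hTs : ∀ y : X (n + 1),
      ‖T.symm (y : V (n + 1))‖⁻¹ • T.symm (y : V (n + 1)) ∈ Metric.sphere (0 : E) 1 := fun y => by
    rw [mem_sphere_zero_iff_norm, norm_smul, norm_inv, norm_norm,
      inv_mul_cancel₀ (norm_ne_zero_iff.mpr (hTn y))]
  let r : C(X (n + 1), Metric.sphere (0 : E) 1) :=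
    ⟨fun y => ⟨_, hTs y⟩, Continuous.subtype_mk
        ((hTc.norm.inv₀ fun y => norm_ne_zero_iff.mpr (hTn y)).smul hTc) hTs⟩
  have hιb : ι b = base (n + 1) := Subtype.ext hTb
  have hrι : ∀ s, r (ι s) = s := by
    intro s
    apply Subtype.ext
    change ‖T.symm (T s)‖⁻¹ • T.symm (T s) = (s : E)
    rw [T.symm_apply_apply, norm_eq_of_mem_sphere, inv_one, one_smul]
  have hrb : r (base (n + 1)) = b := by rw [← hιb, hrι]
  refine ⟨MulEquiv.ofBijective (mapPi ι hιb) ⟨?_, ?_⟩⟩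
  · refine Function.LeftInverse.injective (g := mapPi r hrb) fun a => ?_
    obtain ⟨f, rfl⟩ := cls_surj a
    rw [mapPi_cls, mapPi_cls]
    congr 1
    ext1 z
    exact hrι (f z)
  · refine Function.RightInverse.surjective (g := mapPi r hrb) fun a => ?_
    obtain ⟨f, rfl⟩ := cls_surj a
    rw [mapPi_cls, mapPi_cls]
    refine (cls_eq (homotopic_of_smul (fun z => ‖T.symm (f z : V (n + 1))‖⁻¹)
      (fun z => inv_pos.mpr (norm_pos_iff.mpr (hTn (f z)))) fun z => ?_)).symm
    change T (‖T.symm (f z : V (n + 1))‖⁻¹ • T.symm (f z : V (n + 1))) = _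
    rw [map_smul, T.apply_symm_apply]

end SpherePi

/-- For every `n ≥ 1` (written as `n + 1` for a natural number `n`), the `n`-th
homotopy group of the `n`-sphere (the unit sphere in `ℝ^{n+1}`, with the subspace
topology) at any basepoint is isomorphic to the group of integers. -/
theorem homotopyGroup_n_sphere_n_iso_int (n : ℕ)
    (b : Metric.sphere (0 : EuclideanSpace ℝ (Fin (n + 2))) 1) :
    Nonempty ((π_ (n + 1) (Metric.sphere (0 : EuclideanSpace ℝ (Fin (n + 2))) 1) b) ≃*
      Multiplicative ℤ) := by
  obtain ⟨e₁⟩ := SpherePi.nonempty_mulEquiv_sphere n b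
  obtain ⟨e₂⟩ := SpherePi.nonempty_mulEquiv_int (m := n + 1)
  exact ⟨e₁.trans e₂⟩
end
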